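/- (Spectral theorem for the sub-elliptic operator) Let V ∈ S_p with 1 < p < ∞. Then there exist real numbers 0 < λ₁ ≤ λ₂ ≤ λ₃ ≤ ⋯ with λ_k → ∞ as k → ∞, and functions w_k ∈ H₀(Ω) forming an orthonormal basis of L²(Ω), such that a(w_k, v) = λ_k ∫_Ω w_k v dxdy for all v ∈ H₀(Ω) and all k ≥ 1. Moreover the eigenvalues satisfy the min-max characterization λ_k = inf over k-dimensional subspaces E of H₀(Ω) of sup{ a(u,u) : u ∈ E, ‖u‖_{L²(Ω)} = 1 }. -/

import Mathlib

open MeasureTheory Set Filter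

noncomputable section

/-- The open unit square `Ω = (0,1) × (0,1)` in `ℝ²`. -/
def Omega : Set (ℝ × ℝ) := Ioo (0:ℝ) 1 ×ˢ Ioo (0:ℝ) 1

/-- Test functions on a set `s`: smooth with compact support contained in `s`. -/
def IsTestOn (s : Set (ℝ × ℝ)) (φ : ℝ × ℝ → ℝ) : Prop :=
  ContDiff ℝ (⊤ : ℕ∞) φ ∧ HasCompactSupport φ ∧ tsupport φ ⊆ s

/-- Classical partial derivative in the `x`-direction. -/
def pdx (φ : ℝ × ℝ → ℝ) (p : ℝ × ℝ) : ℝ := fderiv ℝ φ p (1, 0)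

/-- Classical partial derivative in the `y`-direction. -/
def pdy (φ : ℝ × ℝ → ℝ) (p : ℝ × ℝ) : ℝ := fderiv ℝ φ p (0, 1)

/-- `g` is a weak `x`-partial derivative of `u` on `s`. -/
def HasWeakDerivXOn (s : Set (ℝ × ℝ)) (u g : ℝ × ℝ → ℝ) : Prop :=
  LocallyIntegrableOn u s volume ∧ LocallyIntegrableOn g s volume ∧
  ∀ φ : ℝ × ℝ → ℝ, IsTestOn s φ →
    ∫ p in s, u p * pdx φ p = - ∫ p in s, g p * φ p

/-- `g` is a weak `y`-partial derivative of `u` on `s`. -/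
def HasWeakDerivYOn (s : Set (ℝ × ℝ)) (u g : ℝ × ℝ → ℝ) : Prop :=
  LocallyIntegrableOn u s volume ∧ LocallyIntegrableOn g s volume ∧
  ∀ φ : ℝ × ℝ → ℝ, IsTestOn s φ →
    ∫ p in s, u p * pdy φ p = - ∫ p in s, g p * φ p

/-- Test functions on `Ω`. -/
def IsTest (φ : ℝ × ℝ → ℝ) : Prop := IsTestOn Omega φ

/-- Membership in the weighted Sobolev space `𝓗¹(Ω)`, with weak derivatives `gx, gy`:
`u ∈ L²(Ω)`, `gx = ∂ₓu`, `gy = ∂_y u` weakly, and `y^α₁ gx, x^α₂ gy ∈ L²(Ω)`. -/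
structure MemH1 (α₁ α₂ : ℝ) (u gx gy : ℝ × ℝ → ℝ) : Prop where
  memL2 : MemLp u 2 (volume.restrict Omega)
  weakX : HasWeakDerivXOn Omega u gx
  weakY : HasWeakDerivYOn Omega u gy
  wgx : MemLp (fun p => p.2 ^ α₁ * gx p) 2 (volume.restrict Omega)
  wgy : MemLp (fun p => p.1 ^ α₂ * gy p) 2 (volume.restrict Omega)

/-- The `𝓗¹(Ω)` norm of `u` (with weak derivatives `gx, gy`). -/
def H1Norm (α₁ α₂ : ℝ) (u gx gy : ℝ × ℝ → ℝ) : ℝ :=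
  Real.sqrt ((∫ p in Omega, (u p) ^ 2) +
    (∫ p in Omega, (p.2 ^ α₁ * gx p) ^ 2) +
    (∫ p in Omega, (p.1 ^ α₂ * gy p) ^ 2))

/-- Membership in `𝓗₀¹(Ω)`: member of `𝓗¹(Ω)` approximable in the `𝓗¹` norm by
test functions. -/
def MemH10 (α₁ α₂ : ℝ) (u gx gy : ℝ × ℝ → ℝ) : Prop :=
  MemH1 α₁ α₂ u gx gy ∧
  ∀ ε : ℝ, 0 < ε → ∃ φ : ℝ × ℝ → ℝ, IsTest φ ∧
    H1Norm α₁ α₂ (fun p => u p - φ p) (fun p => gx p - pdx φ p)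
      (fun p => gy p - pdy φ p) < ε

/-- Membership in `H₀(Ω) = {u ∈ 𝓗₀¹(Ω) : ∫_Ω V u² < ∞}`. -/
def MemH0 (α₁ α₂ : ℝ) (V u gx gy : ℝ × ℝ → ℝ) : Prop :=
  MemH10 α₁ α₂ u gx gy ∧
  IntegrableOn (fun p => V p * (u p) ^ 2) Omega volume

/-- The bilinear form `a(u,v)` associated with the sub-elliptic operator with potential `V`. -/
def aForm (α₁ α₂ : ℝ) (V u gx gy v hx hy : ℝ × ℝ → ℝ) : ℝ :=
  ∫ p in Omega, ((p.2 ^ α₁ * gx p) * (p.2 ^ α₁ * hx p) +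
    (p.1 ^ α₂ * gy p) * (p.1 ^ α₂ * hy p) + V p * u p * v p)

/-- The bilinear form `a₁(u,v)` (no potential). -/
def a1Form (α₁ α₂ : ℝ) (u gx gy v hx hy : ℝ × ℝ → ℝ) : ℝ :=
  ∫ p in Omega, ((p.2 ^ α₁ * gx p) * (p.2 ^ α₁ * hx p) +
    (p.1 ^ α₂ * gy p) * (p.1 ^ α₂ * hy p))

/-- Membership in `S_p = {V ∈ L^p(Ω) : V ≥ 0 a.e., ‖V‖_{L^p(Ω)} ≤ M}`. -/
def MemSp (ppow M : ℝ) (V : ℝ × ℝ → ℝ) : Prop :=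
  MemLp V (ENNReal.ofReal ppow) (volume.restrict Omega) ∧
  (∀ᵐ p ∂(volume.restrict Omega), 0 ≤ V p) ∧
  eLpNorm V (ENNReal.ofReal ppow) (volume.restrict Omega) ≤ ENNReal.ofReal M

/-- `u` (with weak derivatives `gx, gy`) is an eigenfunction of the sub-elliptic operator
with potential `V` for the eigenvalue `lam`. -/
def IsEigenfun (α₁ α₂ : ℝ) (V : ℝ × ℝ → ℝ) (lam : ℝ) (u gx gy : ℝ × ℝ → ℝ) : Prop :=
  MemH0 α₁ α₂ V u gx gy ∧
  ∀ v hx hy : ℝ × ℝ → ℝ, MemH0 α₁ α₂ V v hx hy →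
    aForm α₁ α₂ V u gx gy v hx hy = lam * ∫ p in Omega, u p * v p

/-- The first eigenvalue `λ₁(V) = inf { a(u,u) : u ∈ H₀(Ω), ‖u‖_{L²} = 1 }`. -/
def lam1 (α₁ α₂ : ℝ) (V : ℝ × ℝ → ℝ) : ℝ :=
  sInf { r | ∃ u gx gy : ℝ × ℝ → ℝ, MemH0 α₁ α₂ V u gx gy ∧
    (∫ p in Omega, (u p) ^ 2) = 1 ∧ r = aForm α₁ α₂ V u gx gy u gx gy }

/-- `sup { a(u,u) : u ∈ span(φ), ‖u‖_{L²(Ω)} = 1 }` for a finite family `φ` with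
weak derivatives `φx, φy`. -/
def rayleighSup (α₁ α₂ : ℝ) (V : ℝ × ℝ → ℝ) {k : ℕ} (φ φx φy : Fin k → ℝ × ℝ → ℝ) : ℝ :=
  sSup { s | ∃ c : Fin k → ℝ,
    (∫ p in Omega, (∑ i, c i * φ i p) ^ 2) = 1 ∧
    s = aForm α₁ α₂ V (fun p => ∑ i, c i * φ i p) (fun p => ∑ i, c i * φx i p)
      (fun p => ∑ i, c i * φy i p) (fun p => ∑ i, c i * φ i p)
      (fun p => ∑ i, c i * φx i p) (fun p => ∑ i, c i * φy i p) }

/-- The set of values `sup { a(u,u) : u ∈ E, ‖u‖ = 1 }` over `k`-dimensional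
subspaces `E` of `H₀(Ω)` (represented by `L²(Ω)`-linearly independent families of
`k` elements of `H₀(Ω)`). -/
def minmaxSet (α₁ α₂ : ℝ) (V : ℝ × ℝ → ℝ) (k : ℕ) : Set ℝ :=
  { r | ∃ φ φx φy : Fin k → ℝ × ℝ → ℝ,
      (∀ i, MemH0 α₁ α₂ V (φ i) (φx i) (φy i)) ∧
      (∀ c : Fin k → ℝ, (∀ᵐ p ∂(volume.restrict Omega), ∑ i, c i * φ i p = 0) → c = 0) ∧
      r = rayleighSup α₁ α₂ V φ φx φy }

/-- The `k`-th eigenvalue via the min-max principle. -/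
def lamk (α₁ α₂ : ℝ) (V : ℝ × ℝ → ℝ) (k : ℕ) : ℝ := sInf (minmaxSet α₁ α₂ V k)

/-- Membership in `U = (𝓗₀¹(Ω) ∩ L^{2q}(Ω)) \ {0}`. -/
def MemU (α₁ α₂ qe : ℝ) (u gx gy : ℝ × ℝ → ℝ) : Prop :=
  MemH10 α₁ α₂ u gx gy ∧
  MemLp u (ENNReal.ofReal (2 * qe)) (volume.restrict Omega) ∧
  ¬ (∀ᵐ p ∂(volume.restrict Omega), u p = 0)

/-- The functional `J(u) = (a₁(u,u) + M ‖u‖_{L^{2q}(Ω)}²) / ‖u‖_{L²(Ω)}²`. -/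
def Jfun (α₁ α₂ M qe : ℝ) (u gx gy : ℝ × ℝ → ℝ) : ℝ :=
  (a1Form α₁ α₂ u gx gy u gx gy +
    M * (∫ p in Omega, |u p| ^ (2 * qe)) ^ (1 / qe)) / (∫ p in Omega, (u p) ^ 2)

/-!
Encoding `u ∈ H₀(Ω)` by `(u, y^α₁ ∂ₓu, x^α₂ ∂_yu, √V u) ∈ L²(Ω)⁴` turns `H₀(Ω)` into a Hilbert
space `H` with inner product `(u, v)_{L²} + a(u, v)`. If the embedding `J : H → L²(Ω)` is compact
with dense range, its squared singular values `μ k` give the eigenvalues `(μ k)⁻¹ - 1` of `a`, and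
coercivity of `a` makes them positive.

Since `2 α₁, 2 α₂ ≤ 1`, the energy of a test function dominates `∫ y (∂ₓφ)² + x (∂_yφ)²`. Above the
diagonal `x = y` one integrates `∂ₓφ` from the side `x = 0`, below it `∂_yφ` from `y = 0`: this
bounds `φ(x, y)²` by a one-dimensional integral of the energy density, which gives the Poincaré
inequality and makes the strips of width `h` along the degenerate sides contribute only `O(h)`. On
the rest of the square both weights are at least `h`, and the Poincaré inequality on the cells of a
fine grid controls the remainder up to finitely many cell averages. Hence `J` is a limit of finite
rank operators.
-/

/-! ### Eigenbases of compact embeddings of Hilbert spaces -/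

theorem exists_linearIndependent_comp_span_eq_iff {K M N : Type*} [DivisionRing K]
    [AddCommGroup M] [Module K M] [AddCommGroup N] [Module K N] {f : M →ₗ[K] N}
    {E : Submodule K M} {n : ℕ} (hn : 0 < n) :
    (∃ v : Fin n → M, LinearIndependent K (f ∘ v) ∧ Submodule.span K (range v) = E) ↔
      Module.finrank K E = n ∧ Disjoint E f.ker := by
  constructor
  · rintro ⟨v, hv, rfl⟩
    refine ⟨?_, (Submodule.range_ker_disjoint hv)⟩
    rw [finrank_span_eq_card hv.of_comp, Fintype.card_fin]
  · rintro ⟨hE, hdisj⟩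
    have := Module.finite_of_finrank_pos (hE.symm ▸ hn)
    let b := Module.finBasisOfFinrankEq K E hE
    have hspan : Submodule.span K (range fun i => (b i : M)) = E := by
      rw [show (fun i => (b i : M)) = E.subtype ∘ b from rfl, range_comp, Submodule.span_image,
        b.span_eq, Submodule.map_top, Submodule.range_subtype]
    refine ⟨fun i => b i, LinearIndependent.map ?_ (hspan.symm ▸ hdisj), hspan⟩
    exact b.linearIndependent.map' E.subtype E.ker_subtype

theorem exists_seq_forall_span_image_Iio {K M : Type*} [DivisionRing K] [AddCommGroup M]
    [Module K M] {P : Submodule K M → M → Prop}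
    (h : ∀ F : Submodule K M, FiniteDimensional K F → ∃ v, P F v) :
    ∃ e : ℕ → M, ∀ n, P (Submodule.span K (e '' Iio n)) (e n) := by
  choose! next hnext using h
  let e : ℕ → M := Nat.strongRec fun n prev =>
    next (Submodule.span K (range fun j : Iio n => prev j j.2))
  refine ⟨e, fun n => ?_⟩
  have he : e n = next (Submodule.span K (e '' Iio n)) := by
    rw [image_eq_range]
    exact Nat.strongRec_eq _ n
  rw [he]
  exact hnext _ (FiniteDimensional.span_of_finite K ((finite_Iio n).image e))

section SingularSystem

open scoped InnerProductSpace Topology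

variable {H L : Type*} [NormedAddCommGroup H] [InnerProductSpace ℝ H]
  [NormedAddCommGroup L] [InnerProductSpace ℝ L] {J : H →L[ℝ] L}

section Existence

variable [CompleteSpace H]

theorem isCompactOperator_of_forall_exists_finset [CompleteSpace L]
    (h : ∀ ε > 0, ∃ S : Finset L, ∀ v, (∀ g ∈ S, ⟪g, J v⟫_ℝ = 0) → ‖J v‖ ≤ ε * ‖v‖) :
    IsCompactOperator J := by
  suffices hJ : J ∈ closure {T : H →L[ℝ] L | IsCompactOperator T} by
    rwa [isClosed_setOfPred_isCompactOperator.closure_eq] at hJ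
  refine Metric.mem_closure_iff.2 fun ε hε => ?_
  obtain ⟨S, hS⟩ := h (ε / 2) (half_pos hε)
  let K : Submodule ℝ H := Submodule.span ℝ (J.adjoint '' S)
  have : FiniteDimensional ℝ K := FiniteDimensional.span_of_finite ℝ (S.finite_toSet.image _)
  refine ⟨J ∘L K.starProjection, ?_, ?_⟩
  · exact (isCompactOperator_of_locallyCompactSpace_dom (K.orthogonalProjectionOnto)).clm_comp
      (J ∘L K.subtypeL)
  · rw [dist_eq_norm]
    refine lt_of_le_of_lt (ContinuousLinearMap.opNorm_le_bound _ (half_pos hε).le fun v => ?_)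
      (half_lt_self hε)
    have hv : v - K.starProjection v ∈ Kᗮ := K.sub_starProjection_mem_orthogonal v
    calc ‖(J - J ∘L K.starProjection) v‖ = ‖J (v - K.starProjection v)‖ := by simp
      _ ≤ ε / 2 * ‖v - K.starProjection v‖ := hS _ fun g hg => by
          rw [← ContinuousLinearMap.adjoint_inner_left]
          exact hv _ (Submodule.subset_span (mem_image_of_mem _ hg))
      _ ≤ ε / 2 * ‖v‖ := by
          gcongr
          simpa using Kᗮ.norm_starProjection_apply_le v

theorem exists_norm_eq_one_inner_map_eq_sq_norm_mul [CompleteSpace L] (hJ : IsCompactOperator J)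
    (hJ0 : J ≠ 0) : ∃ v, ‖v‖ = 1 ∧ ∀ x, ⟪J v, J x⟫_ℝ = ‖J‖ ^ 2 * ⟪v, x⟫_ℝ := by
  obtain ⟨z, hz⟩ : ∃ z, J z ≠ 0 := by simpa [ContinuousLinearMap.ext_iff] using hJ0
  have : Nontrivial H := ⟨z, 0, fun h => hz (by rw [h, map_zero])⟩
  let T : H →L[ℝ] H := J.adjoint ∘L J
  have hT : T.IsPositive := ContinuousLinearMap.isPositive_adjoint_comp_self J
  have hTnorm : ‖T‖ = ‖J‖ ^ 2 := by rw [ContinuousLinearMap.norm_adjoint_comp_self, sq]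
  have hspec : ‖T‖ ∈ spectrum ℝ T := by
    by_contra hres
    obtain ⟨ε, hε, hle⟩ := T.rayleighQuotient_le_of_norm_mem_resolventSet (not_not.1 hres)
    have habs x : |T.rayleighQuotient x| ≤ ‖T‖ - ε := by
      rw [abs_of_nonneg (div_nonneg (hT.2 x) (sq_nonneg _))]
      exact hle x
    linarith [T.norm_eq_iSup_rayleighQuotient hT.isSymmetric, ciSup_le habs]
  have hTcpt : IsCompactOperator T := hJ.clm_comp J.adjoint
  obtain ⟨u, hu⟩ := ((hTcpt.hasEigenvalue_iff_mem_spectrum (by simpa [hTnorm])).2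
    hspec).exists_hasEigenvector
  refine ⟨‖u‖⁻¹ • u, norm_smul_inv_norm hu.2, fun x => ?_⟩
  rw [← ContinuousLinearMap.adjoint_inner_left, ← hTnorm, ← real_inner_smul_left, map_smul,
    map_smul, smul_comm ‖T‖]
  congr 2
  exact hu.apply_eq_smul

theorem exists_mem_orthogonal_inner_map_eq [CompleteSpace L] (hJ : IsCompactOperator J)
    (hdense : DenseRange J) (hL : ¬ FiniteDimensional ℝ L) (F : Submodule ℝ H)
    [FiniteDimensional ℝ F] :
    ∃ v ∈ Fᗮ, ‖v‖ = 1 ∧ ∃ m > 0, (∀ x ∈ Fᗮ, ⟪J v, J x⟫_ℝ = m * ⟪v, x⟫_ℝ) ∧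
      ∀ x ∈ Fᗮ, ‖J x‖ ^ 2 ≤ m * ‖x‖ ^ 2 := by
  let JF : Fᗮ →L[ℝ] L := J ∘L Fᗮ.subtypeL
  have hJF : JF ≠ 0 := by
    refine fun h0 => hL ?_
    have hrange : (J : H →ₗ[ℝ] L).range ≤ F.map (J : H →ₗ[ℝ] L) := by
      rintro _ ⟨v, rfl⟩
      obtain ⟨a, ha, b, hb, rfl⟩ := F.exists_add_mem_mem_orthogonal v
      have hb0 : J b = 0 := DFunLike.congr_fun h0 ⟨b, hb⟩
      exact ⟨a, ha, by simp [hb0]⟩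
    have htop : F.map (J : H →ₗ[ℝ] L) = ⊤ := SetLike.coe_injective <|
      ((Submodule.closed_of_finiteDimensional _).closure_eq.symm.trans
        (hdense.mono hrange).closure_eq)
    exact Module.finite_def.2 (htop ▸ (Module.Finite.iff_fg.1 inferInstance))
  obtain ⟨v, hv, hJv⟩ := exists_norm_eq_one_inner_map_eq_sq_norm_mul (hJ.comp_clm Fᗮ.subtypeL) hJF
  refine ⟨v, v.2, hv, ‖JF‖ ^ 2, by positivity, fun x hx => hJv ⟨x, hx⟩, fun x hx => ?_⟩
  rw [← mul_pow]
  exact pow_le_pow_left₀ (norm_nonneg _) (JF.le_opNorm ⟨x, hx⟩) 2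

end Existence

variable (J) in
/-- `e` is an orthonormal sequence of right singular vectors of `J`, with squared singular values
`μ`, obtained by successively maximising `‖J v‖` over the unit vectors `v` orthogonal to the
preceding ones. -/
structure IsSingularSystem (μ : ℕ → ℝ) (e : ℕ → H) : Prop where
  orthonormal : Orthonormal ℝ e
  pos : ∀ k, 0 < μ k
  inner_map : ∀ k v, ⟪J (e k), J v⟫_ℝ = μ k * ⟪e k, v⟫_ℝ
  norm_map_sq_le : ∀ k v, (∀ j < k, ⟪e j, v⟫_ℝ = 0) → ‖J v‖ ^ 2 ≤ μ k * ‖v‖ ^ 2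

theorem exists_isSingularSystem [CompleteSpace H] [CompleteSpace L] (hJ : IsCompactOperator J)
    (hdense : DenseRange J) (hL : ¬ FiniteDimensional ℝ L) : ∃ μ e, IsSingularSystem J μ e := by
  obtain ⟨e, he⟩ := exists_seq_forall_span_image_Iio fun F _ =>
    exists_mem_orthogonal_inner_map_eq hJ hdense hL F
  let S (k : ℕ) : Submodule ℝ H := Submodule.span ℝ (e '' Iio k)
  choose hperp hnorm μ hμ hinner hle using he
  have hspan {k : ℕ} {f : H →ₗ[ℝ] ℝ} (hf : ∀ j < k, f (e j) = 0) : ∀ a ∈ S k, f a = 0 :=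
    Submodule.span_le (p := f.ker).2 (by rintro _ ⟨j, hj, rfl⟩; exact hf j hj)
  have horth {j k : ℕ} (hjk : j < k) : ⟪e j, e k⟫_ℝ = 0 :=
    hperp k _ (Submodule.subset_span (mem_image_of_mem e hjk))
  have hmem {k : ℕ} {v : H} (hv : ∀ j < k, ⟪e j, v⟫_ℝ = 0) : v ∈ (S k)ᗮ :=
    hspan (f := (innerₗ H).flip v) hv
  refine ⟨μ, e, ⟨⟨hnorm, fun j k hjk => ?_⟩, hμ, fun k v => ?_,
    fun k v hv => hle k v (hmem hv)⟩⟩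
  · rcases hjk.lt_or_gt with h | h
    exacts [horth h, (real_inner_comm _ _).trans (horth h)]
  · have hJe : ∀ j < k, ⟪J (e k), J (e j)⟫_ℝ = 0 := fun j hj => by
      rw [real_inner_comm, hinner j _ (hmem fun i hi => horth (hi.trans hj)), horth hj, mul_zero]
    have : FiniteDimensional ℝ (S k) :=
      FiniteDimensional.span_of_finite ℝ ((finite_Iio k).image e)
    obtain ⟨a, ha, b, hb, rfl⟩ := (S k).exists_add_mem_mem_orthogonal v
    have hJa : ⟪J (e k), J a⟫_ℝ = 0 := hspan (f := innerₗ L (J (e k)) ∘ₗ J) hJe a ha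
    have hea : ⟪e k, a⟫_ℝ = 0 := (real_inner_comm _ _).trans (hperp k a ha)
    rw [map_add, inner_add_right, inner_add_right, hJa, hea, hinner k b hb, zero_add, zero_add]

namespace IsSingularSystem

variable {μ : ℕ → ℝ} {e : ℕ → H}

theorem norm_map_sq (h : IsSingularSystem J μ e) (k : ℕ) : ‖J (e k)‖ ^ 2 = μ k := by
  rw [← real_inner_self_eq_norm_sq, h.inner_map, real_inner_self_eq_norm_sq, h.orthonormal.1]
  ring

theorem inner_map_of_ne (h : IsSingularSystem J μ e) {j k : ℕ} (hjk : j ≠ k) :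
    ⟪J (e j), J (e k)⟫_ℝ = 0 := by
  rw [h.inner_map, h.orthonormal.2 hjk, mul_zero]

theorem antitone (h : IsSingularSystem J μ e) : Antitone μ := fun j k hjk => by
  rw [← h.norm_map_sq k]
  refine (h.norm_map_sq_le j _ fun i hi => h.orthonormal.2 (hi.trans_le hjk).ne).trans_eq ?_
  rw [h.orthonormal.1, one_pow, mul_one]

theorem tendsto_zero [CompleteSpace H] [CompleteSpace L] (h : IsSingularSystem J μ e)
    (hJ : IsCompactOperator J) : Tendsto μ atTop (𝓝 0) := by
  obtain ⟨K, hK, hJK⟩ := hJ.image_closedBall_subset_compact 1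
  obtain ⟨y, -, ψ, hψ, hy⟩ := hK.tendsto_subseq fun n =>
    hJK (mem_image_of_mem J (mem_closedBall_zero_iff.2 (h.orthonormal.1 n).le))
  have hweak : Tendsto (fun n => ⟪J (e n), y⟫_ℝ) atTop (𝓝 0) := by
    have hbessel := (h.orthonormal.inner_products_summable (x := J.adjoint y)).tendsto_atTop_zero
    refine (tendsto_zero_iff_norm_tendsto_zero.2 ?_)
    simpa [ContinuousLinearMap.adjoint_inner_right, Real.sqrt_sq_eq_abs] using hbessel.sqrt
  have hy0 : y = 0 := by
    have hstrong := hy.inner (𝕜 := ℝ) (tendsto_const_nhds (x := y))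
    exact inner_self_eq_zero.1 (tendsto_nhds_unique hstrong (hweak.comp hψ.tendsto_atTop))
  have hsub : Tendsto (μ ∘ ψ) atTop (𝓝 0) := by
    simpa [hy0, Function.comp_def, h.norm_map_sq] using hy.norm.pow 2
  exact (tendsto_iff_tendsto_subseq_of_antitone h.antitone hψ.tendsto_atTop).2 hsub

theorem eq_zero_of_inner_map_eq_zero [CompleteSpace H] [CompleteSpace L]
    (h : IsSingularSystem J μ e) (hμ : Tendsto μ atTop (𝓝 0)) (hdense : DenseRange J) {f : L}
    (hf : ∀ k, ⟪f, J (e k)⟫_ℝ = 0) : f = 0 := by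
  have hJf : ‖J (J.adjoint f)‖ ^ 2 ≤ 0 := by
    have hlim : Tendsto (fun k => μ k * ‖J.adjoint f‖ ^ 2) atTop (𝓝 0) := by
      simpa using hμ.mul_const (‖J.adjoint f‖ ^ 2)
    refine ge_of_tendsto' hlim fun k => h.norm_map_sq_le k _ fun j _ => ?_
    rw [ContinuousLinearMap.adjoint_inner_right, real_inner_comm, hf]
  have hadj : J.adjoint f = 0 := by
    rw [← inner_self_eq_zero (𝕜 := ℝ), ContinuousLinearMap.adjoint_inner_left,
      norm_eq_zero.1 (pow_eq_zero_iff two_ne_zero |>.1 (hJf.antisymm (sq_nonneg _))),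
      inner_zero_right]
  refine hdense.induction_on (p := fun g => ⟪f, g⟫_ℝ = 0) f ?_ ?_ |> inner_self_eq_zero.1
  · exact isClosed_eq (by fun_prop) continuous_const
  · exact fun v => by rw [← ContinuousLinearMap.adjoint_inner_left, hadj, inner_zero_left]

theorem mul_norm_sq_le_of_mem_span (h : IsSingularSystem J μ e) {k : ℕ} {v : H}
    (hv : v ∈ Submodule.span ℝ (range fun i : Fin (k + 1) => e i)) :
    μ k * ‖v‖ ^ 2 ≤ ‖J v‖ ^ 2 := by
  obtain ⟨c, rfl⟩ := (Submodule.mem_span_range_iff_exists_fun ℝ).1 hv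
  have hon : Orthonormal ℝ fun i : Fin (k + 1) => e i := h.orthonormal.comp _ Fin.val_injective
  have hinner (i : Fin (k + 1)) : ⟪e i, ∑ j, c j • e j⟫_ℝ = c i := hon.inner_right_fintype c i
  have hnorm : ‖∑ i, c i • e i‖ ^ 2 = ∑ i, c i ^ 2 := by
    simp_rw [← real_inner_self_eq_norm_sq, sum_inner, real_inner_smul_left, hinner, sq]
  calc μ k * ‖∑ i, c i • e i‖ ^ 2 = ∑ i, μ k * c i ^ 2 := by rw [hnorm, Finset.mul_sum]
    _ ≤ ∑ i : Fin (k + 1), μ i * c i ^ 2 := by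
        gcongr with i; exact h.antitone (Nat.lt_succ_iff.1 i.2)
    _ = ‖J (∑ i, c i • e i)‖ ^ 2 := by
      rw [← real_inner_self_eq_norm_sq]
      nth_rw 1 [map_sum]
      simp_rw [map_smul, sum_inner, real_inner_smul_left, h.inner_map, hinner]
      exact Finset.sum_congr rfl fun i _ => by ring

end IsSingularSystem

variable (J) in
/-- The bilinear form `a(u, v) = ⟪u, v⟫ - ⟪J u, J v⟫`, for `H` a form domain that carries the inner
product `a(u, v) + ⟪J u, J v⟫` and `J` its embedding into the ambient space. -/
def energyForm (u v : H) : ℝ := ⟪u, v⟫_ℝ - ⟪J u, J v⟫_ℝ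

theorem energyForm_self_of_norm_map_eq_one {v : H} (hv : ‖J v‖ = 1) :
    energyForm J v v = ‖v‖ ^ 2 - 1 := by
  rw [energyForm, real_inner_self_eq_norm_sq, real_inner_self_eq_norm_sq, hv, one_pow]

variable (J) in
/-- The supremum of the energy over the `J`-normalised vectors of a subspace. -/
def supEnergy (E : Submodule ℝ H) : ℝ := sSup ((fun v => energyForm J v v) '' {v ∈ E | ‖J v‖ = 1})

theorem bddAbove_energyForm_image {E : Submodule ℝ H} [FiniteDimensional ℝ E]
    (hE : Disjoint E J.ker) : BddAbove ((fun v => energyForm J v v) '' {v ∈ E | ‖J v‖ = 1}) := by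
  have hinj : ((J : H →ₗ[ℝ] L) ∘ₗ E.subtype).ker = ⊥ := by
    rw [LinearMap.ker_comp]
    exact Submodule.disjoint_iff_comap_eq_bot.1 hE
  obtain ⟨K, -, hK⟩ := LinearMap.exists_antilipschitzWith _ hinj
  refine ⟨K ^ 2 - 1, ?_⟩
  rintro _ ⟨v, ⟨hvE, hv : ‖J v‖ = 1⟩, rfl⟩
  have hvK : ‖v‖ ≤ K := by simpa [hv] using hK.le_mul_norm (map_zero _) ⟨v, hvE⟩
  simp only [energyForm_self_of_norm_map_eq_one hv]
  gcongr

namespace IsSingularSystem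

variable {μ : ℕ → ℝ} {e : ℕ → H}

theorem exists_mem_inv_le_norm_sq (h : IsSingularSystem J μ e) {E : Submodule ℝ H} {k : ℕ}
    (hE : Module.finrank ℝ E = k + 1) (hker : Disjoint E J.ker) :
    ∃ v ∈ E, ‖J v‖ = 1 ∧ (μ k)⁻¹ ≤ ‖v‖ ^ 2 := by
  have : FiniteDimensional ℝ E := FiniteDimensional.of_finrank_eq_succ hE
  let coeffs : E →ₗ[ℝ] Fin k → ℝ := LinearMap.pi fun j => innerₗ H (e j) ∘ₗ E.subtype
  have hcoeffs : coeffs.ker ≠ ⊥ := LinearMap.ker_ne_bot_of_finrank_lt (by simp [hE])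
  obtain ⟨⟨u, huE⟩, hu, hu0⟩ := Submodule.exists_mem_ne_zero_of_ne_bot hcoeffs
  have hJu : 0 < ‖J u‖ := norm_pos_iff.2 fun hJu =>
    hu0 (Subtype.ext ((Submodule.disjoint_def.1 hker) u huE hJu))
  have hle : ‖J u‖ ^ 2 ≤ μ k * ‖u‖ ^ 2 := h.norm_map_sq_le k u fun j hj => congrFun hu ⟨j, hj⟩
  refine ⟨‖J u‖⁻¹ • u, E.smul_mem _ huE, ?_, ?_⟩
  · rw [map_smul, norm_smul, norm_inv, norm_norm, inv_mul_cancel₀ hJu.ne']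
  · rw [norm_smul, norm_inv, norm_norm, mul_pow, inv_pow, inv_mul_eq_div,
      inv_le_iff_one_le_mul₀' (h.pos k), ← mul_div_assoc]
    exact (one_le_div (by positivity)).2 hle

theorem isLeast_supEnergy (h : IsSingularSystem J μ e) (k : ℕ) :
    IsLeast (supEnergy J '' {E | Module.finrank ℝ E = k + 1 ∧ Disjoint E J.ker})
      ((μ k)⁻¹ - 1) := by
  have hlower {E : Submodule ℝ H} (hE : Module.finrank ℝ E = k + 1) (hker : Disjoint E J.ker) :
      (μ k)⁻¹ - 1 ≤ supEnergy J E := by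
    have : FiniteDimensional ℝ E := FiniteDimensional.of_finrank_eq_succ hE
    obtain ⟨v, hvE, hv, hle⟩ := h.exists_mem_inv_le_norm_sq hE hker
    refine le_csSup_of_le (bddAbove_energyForm_image hker) ⟨v, ⟨hvE, hv⟩, rfl⟩ ?_
    simp only [energyForm_self_of_norm_map_eq_one hv]
    gcongr
  let E : Submodule ℝ H := Submodule.span ℝ (range fun i : Fin (k + 1) => e i)
  have hE : Module.finrank ℝ E = k + 1 := by
    have hli := (h.orthonormal.comp _ Fin.val_injective : Orthonormal ℝ fun i : Fin (k + 1) => e i)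
    exact (finrank_span_eq_card hli.linearIndependent).trans (Fintype.card_fin _)
  have hker : Disjoint E J.ker := Submodule.disjoint_def.2 fun v hvE hv => by
    have hle : μ k * ‖v‖ ^ 2 ≤ 0 := by
      simpa [show J v = 0 from hv] using h.mul_norm_sq_le_of_mem_span hvE
    simpa using (nonpos_of_mul_nonpos_right hle (h.pos k)).antisymm (sq_nonneg _)
  refine ⟨⟨E, ⟨hE, hker⟩, (hlower hE hker).antisymm' ?_⟩, ?_⟩
  · obtain ⟨u, huE, hu, -⟩ := h.exists_mem_inv_le_norm_sq hE hker
    refine csSup_le ⟨_, u, ⟨huE, hu⟩, rfl⟩ ?_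
    rintro _ ⟨v, ⟨hvE, hv⟩, rfl⟩
    have hle := h.mul_norm_sq_le_of_mem_span hvE
    simp only [energyForm_self_of_norm_map_eq_one hv]
    rw [hv, one_pow, ← le_inv_mul_iff₀ (h.pos k), mul_one] at hle
    gcongr
  · rintro _ ⟨F, ⟨hF, hFker⟩, rfl⟩
    exact hlower hF hFker

end IsSingularSystem

variable (J) in
/-- `w` is a sequence of eigenvectors of the form `energyForm J`, relative to the inner product
`⟪J u, J v⟫`, for the eigenvalues `lam` in increasing order; the vectors `J (w k)` form a Hilbert
basis and the eigenvalues are the Courant-Fischer values. -/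
structure IsEigenbasis (lam : ℕ → ℝ) (w : ℕ → H) : Prop where
  pos : 0 < lam 0
  monotone : Monotone lam
  tendsto_atTop : Tendsto lam atTop atTop
  orthonormal : Orthonormal ℝ fun k => J (w k)
  eq_zero : ∀ f, (∀ k, ⟪f, J (w k)⟫_ℝ = 0) → f = 0
  energyForm_eq : ∀ k v, energyForm J (w k) v = lam k * ⟪J (w k), J v⟫_ℝ
  isLeast_supEnergy : ∀ k,
    IsLeast (supEnergy J '' {E | Module.finrank ℝ E = k + 1 ∧ Disjoint E J.ker}) (lam k)

theorem exists_isEigenbasis [CompleteSpace H] [CompleteSpace L] (hJ : IsCompactOperator J)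
    (hdense : DenseRange J) (hL : ¬ FiniteDimensional ℝ L) {C : ℝ}
    (hC0 : 0 ≤ C) (hC : ∀ v, ‖J v‖ ^ 2 ≤ C * energyForm J v v) : ∃ lam w, IsEigenbasis J lam w := by
  obtain ⟨μ, e, h⟩ := exists_isSingularSystem hJ hdense hL
  have hμ := h.tendsto_zero hJ
  have hsqrt k : √(μ k) ≠ 0 := (Real.sqrt_pos.2 (h.pos k)).ne'
  refine ⟨fun k => (μ k)⁻¹ - 1, fun k => (√(μ k))⁻¹ • e k, ?_, ?_, ?_,
    ⟨fun k => ?_, fun j k hjk => ?_⟩, fun f hf => ?_, fun k v => ?_, h.isLeast_supEnergy⟩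
  · have hcoer := hC (e 0)
    rw [energyForm, real_inner_self_eq_norm_sq, real_inner_self_eq_norm_sq, h.norm_map_sq,
      h.orthonormal.1] at hcoer
    have hμ0 : μ 0 < 1 := by nlinarith [h.pos 0]
    exact sub_pos.2 ((one_lt_inv₀ (h.pos 0)).2 hμ0)
  · exact fun j k hjk => sub_le_sub_right (inv_anti₀ (h.pos k) (h.antitone hjk)) 1
  · refine tendsto_atTop_add_const_right _ _ (tendsto_inv_nhdsGT_zero.comp ?_)
    exact tendsto_nhdsWithin_iff.2 ⟨hμ, .of_forall h.pos⟩
  · simp only [map_smul, norm_smul, norm_inv, Real.norm_of_nonneg (Real.sqrt_nonneg _)]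
    rw [inv_mul_eq_one₀ (hsqrt k), ← h.norm_map_sq, Real.sqrt_sq (norm_nonneg _)]
  · simp only [map_smul, real_inner_smul_left, real_inner_smul_right, h.inner_map_of_ne hjk,
      mul_zero]
  · refine h.eq_zero_of_inner_map_eq_zero hμ hdense fun k => ?_
    simpa [real_inner_smul_right, hsqrt k] using hf k
  · have := (h.pos k).ne'
    simp only [energyForm, map_smul, real_inner_smul_left, h.inner_map]
    field_simp

end SingularSystem

/-! ### Integrals over intervals and rectangles -/

section IntervalIntegral

variable {f f' : ℝ → ℝ} {a b : ℝ}

theorem integral_sub_const_sq (hf : Continuous f) (a b t : ℝ) :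
    ∫ x in a..b, (f x - t) ^ 2 =
      (∫ x in a..b, f x ^ 2) - 2 * t * (∫ x in a..b, f x) + (b - a) * t ^ 2 := by
  have hexpand (x : ℝ) : (f x - t) ^ 2 = f x ^ 2 - 2 * t * f x + t ^ 2 := by ring
  simp only [hexpand]
  rw [intervalIntegral.integral_add, intervalIntegral.integral_sub,
    intervalIntegral.integral_const_mul, intervalIntegral.integral_const, smul_eq_mul]
  all_goals exact Continuous.intervalIntegrable (by fun_prop) _ _

theorem sq_integral_le_mul_integral_sq (hf : Continuous f) (hab : a ≤ b) :
    (∫ x in a..b, f x) ^ 2 ≤ (b - a) * ∫ x in a..b, f x ^ 2 := by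
  have hquadratic (t : ℝ) :
      0 ≤ (b - a) * (t * t) + (-2 * ∫ x in a..b, f x) * t + ∫ x in a..b, f x ^ 2 := by
    have hnonneg : 0 ≤ ∫ x in a..b, (f x - t) ^ 2 :=
      intervalIntegral.integral_nonneg hab fun x _ => sq_nonneg _
    rw [integral_sub_const_sq hf] at hnonneg
    linarith
  have := discrim_le_zero hquadratic
  rw [discrim] at this
  linarith

theorem mul_integral_sq_le_of_sq_sub_le (hf : Continuous f) (hab : a ≤ b) {K : ℝ}
    (hK : ∀ x ∈ Icc a b, ∀ t ∈ Icc a b, (f x - f t) ^ 2 ≤ K) :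
    (b - a) * ∫ x in a..b, f x ^ 2 ≤ (∫ x in a..b, f x) ^ 2 + (b - a) ^ 2 / 2 * K := by
  have hinner (t : ℝ) (ht : t ∈ Icc a b) : ∫ x in a..b, (f x - f t) ^ 2 ≤ (b - a) * K := by
    rw [← smul_eq_mul, ← intervalIntegral.integral_const]
    exact intervalIntegral.integral_mono_on hab (Continuous.intervalIntegrable (by fun_prop) _ _)
      intervalIntegrable_const fun x hx => hK x hx t ht
  have hdouble : ∫ t in a..b, ∫ x in a..b, (f x - f t) ^ 2 ≤ (b - a) * ((b - a) * K) := by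
    simp only [integral_sub_const_sq hf] at hinner ⊢
    rw [← smul_eq_mul (b - a), ← intervalIntegral.integral_const]
    exact intervalIntegral.integral_mono_on hab (Continuous.intervalIntegrable (by fun_prop) _ _)
      intervalIntegrable_const hinner
  have hexpand : ∫ t in a..b, ∫ x in a..b, (f x - f t) ^ 2 =
      2 * ((b - a) * ∫ x in a..b, f x ^ 2) - 2 * (∫ x in a..b, f x) ^ 2 := by
    simp only [integral_sub_const_sq hf]
    rw [intervalIntegral.integral_add, intervalIntegral.integral_sub,
      intervalIntegral.integral_const_mul, intervalIntegral.integral_mul_const,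
      intervalIntegral.integral_const_mul, intervalIntegral.integral_const, smul_eq_mul]
    · ring
    all_goals exact Continuous.intervalIntegrable (by fun_prop) _ _
  linarith

theorem sq_sub_le_mul_integral_deriv_sq (hf : ∀ x, HasDerivAt f (f' x) x) (hf' : Continuous f')
    {x t : ℝ} (hx : x ∈ Icc a b) (ht : t ∈ Icc a b) :
    (f x - f t) ^ 2 ≤ (b - a) * ∫ s in a..b, f' s ^ 2 := by
  wlog htx : t ≤ x generalizing x t
  · rw [← neg_sub, neg_sq]
    exact this ht hx (le_of_not_ge htx)
  rw [← intervalIntegral.integral_eq_sub_of_hasDerivAt (fun s _ => hf s)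
    (hf'.intervalIntegrable t x)]
  have hmono : ∫ s in t..x, f' s ^ 2 ≤ ∫ s in a..b, f' s ^ 2 :=
    intervalIntegral.integral_mono_interval ht.1 htx hx.2
      (Eventually.of_forall fun s => sq_nonneg _)
      (Continuous.intervalIntegrable (by fun_prop) _ _)
  have hnonneg : 0 ≤ ∫ s in t..x, f' s ^ 2 :=
    intervalIntegral.integral_nonneg htx fun s _ => sq_nonneg _
  calc (∫ s in t..x, f' s) ^ 2
      ≤ (x - t) * ∫ s in t..x, f' s ^ 2 := sq_integral_le_mul_integral_sq hf' htx
    _ ≤ (b - a) * ∫ s in a..b, f' s ^ 2 :=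
        mul_le_mul (by linarith [ht.1, hx.2]) hmono hnonneg (by linarith [ht.1, hx.2])

theorem mul_integral_sq_le_integral_deriv_sq (hf : ∀ x, HasDerivAt f (f' x) x)
    (hf' : Continuous f') (hab : a ≤ b) :
    (b - a) * ∫ x in a..b, f x ^ 2 ≤
      (∫ x in a..b, f x) ^ 2 + (b - a) ^ 3 / 2 * ∫ x in a..b, f' x ^ 2 := by
  have hcont : Continuous f := continuous_iff_continuousAt.2 fun x => (hf x).continuousAt
  refine (mul_integral_sq_le_of_sq_sub_le hcont hab fun x hx t ht =>
    sq_sub_le_mul_integral_deriv_sq hf hf' hx ht).trans_eq ?_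
  ring

theorem sq_le_integral_sq_of_mul_deriv_sq_le {w : ℝ → ℝ} (hf : ∀ x, HasDerivAt f (f' x) x)
    (hf' : Continuous f') (hw : Continuous w) (hf0 : f 0 = 0) {x y : ℝ} (hy : 0 ≤ y) (hyx : y ≤ x)
    (hx : x ≤ 1) (hfw : ∀ s, x * f' s ^ 2 ≤ w s ^ 2) :
    f y ^ 2 ≤ ∫ s in (0 : ℝ)..1, w s ^ 2 := by
  have hnonneg : 0 ≤ ∫ s in (0 : ℝ)..y, f' s ^ 2 :=
    intervalIntegral.integral_nonneg hy fun s _ => sq_nonneg _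
  calc f y ^ 2 = (f y - f 0) ^ 2 := by rw [hf0, sub_zero]
    _ ≤ (y - 0) * ∫ s in (0 : ℝ)..y, f' s ^ 2 :=
        sq_sub_le_mul_integral_deriv_sq hf hf' (right_mem_Icc.2 hy) (left_mem_Icc.2 hy)
    _ ≤ x * ∫ s in (0 : ℝ)..y, f' s ^ 2 := by
        rw [sub_zero]; exact mul_le_mul_of_nonneg_right hyx hnonneg
    _ = ∫ s in (0 : ℝ)..y, x * f' s ^ 2 := (intervalIntegral.integral_const_mul _ _).symm
    _ ≤ ∫ s in (0 : ℝ)..y, w s ^ 2 :=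
        intervalIntegral.integral_mono_on hy (Continuous.intervalIntegrable (by fun_prop) _ _)
          (Continuous.intervalIntegrable (by fun_prop) _ _) fun s _ => hfw s
    _ ≤ ∫ s in (0 : ℝ)..1, w s ^ 2 :=
        intervalIntegral.integral_mono_interval le_rfl hy (hyx.trans hx)
          (Eventually.of_forall fun s => sq_nonneg _)
          (Continuous.intervalIntegrable (by fun_prop) _ _)

end IntervalIntegral

section IteratedIntegral

variable {f g : ℝ × ℝ → ℝ} {a b c d : ℝ}

theorem continuous_integral_fst (hf : Continuous f) (a b : ℝ) :
    Continuous fun y => ∫ x in a..b, f (x, y) :=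
  intervalIntegral.continuous_parametric_intervalIntegral_of_continuous'
    (f := fun y x => f (x, y)) (by fun_prop) a b

theorem continuous_integral_snd (hf : Continuous f) (c d : ℝ) :
    Continuous fun x => ∫ y in c..d, f (x, y) :=
  intervalIntegral.continuous_parametric_intervalIntegral_of_continuous'
    (f := fun x y => f (x, y)) (by fun_prop) c d

theorem setIntegral_Ioo_prod_Ioo (hf : Continuous f) (hab : a ≤ b) (hcd : c ≤ d) :
    ∫ p in Ioo a b ×ˢ Ioo c d, f p = ∫ x in a..b, ∫ y in c..d, f (x, y) := by
  have hint : IntegrableOn f (Icc a b ×ˢ Icc c d) :=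
    hf.continuousOn.integrableOn_compact (isCompact_Icc.prod isCompact_Icc)
  simp only [intervalIntegral.integral_of_le hab, intervalIntegral.integral_of_le hcd,
    integral_Ioc_eq_integral_Ioo]
  exact setIntegral_prod f
    (hint.mono_set (prod_mono Ioo_subset_Icc_self Ioo_subset_Icc_self))

theorem integral_integral_comm (hf : Continuous f) (hab : a ≤ b) (hcd : c ≤ d) :
    ∫ x in a..b, ∫ y in c..d, f (x, y) = ∫ y in c..d, ∫ x in a..b, f (x, y) := by
  have hint : IntegrableOn f (Icc a b ×ˢ Icc c d) :=
    hf.continuousOn.integrableOn_compact (isCompact_Icc.prod isCompact_Icc)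
  simp only [intervalIntegral.integral_of_le hab, intervalIntegral.integral_of_le hcd]
  refine integral_integral_swap (f := fun x y => f (x, y)) ?_
  rw [Measure.prod_restrict]
  exact hint.mono_set (prod_mono Ioc_subset_Icc_self Ioc_subset_Icc_self)

theorem integral_integral_nonneg (hab : a ≤ b) (hcd : c ≤ d) (hf : ∀ p, 0 ≤ f p) :
    0 ≤ ∫ x in a..b, ∫ y in c..d, f (x, y) :=
  intervalIntegral.integral_nonneg hab fun _ _ =>
    intervalIntegral.integral_nonneg hcd fun _ _ => hf _

theorem integral_integral_mono_on (hf : Continuous f) (hg : Continuous g) (hab : a ≤ b)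
    (hcd : c ≤ d) (hfg : ∀ x ∈ Icc a b, ∀ y ∈ Icc c d, f (x, y) ≤ g (x, y)) :
    ∫ x in a..b, ∫ y in c..d, f (x, y) ≤ ∫ x in a..b, ∫ y in c..d, g (x, y) :=
  intervalIntegral.integral_mono_on hab
    ((continuous_integral_snd hf c d).intervalIntegrable _ _)
    ((continuous_integral_snd hg c d).intervalIntegrable _ _) fun x hx =>
      intervalIntegral.integral_mono_on hcd (Continuous.intervalIntegrable (by fun_prop) _ _)
        (Continuous.intervalIntegrable (by fun_prop) _ _) (hfg x hx)

theorem integral_integral_add (hf : Continuous f) (hg : Continuous g) (a b c d : ℝ) :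
    ∫ x in a..b, ∫ y in c..d, (f (x, y) + g (x, y)) =
      (∫ x in a..b, ∫ y in c..d, f (x, y)) + ∫ x in a..b, ∫ y in c..d, g (x, y) := by
  rw [← intervalIntegral.integral_add ((continuous_integral_snd hf c d).intervalIntegrable _ _)
    ((continuous_integral_snd hg c d).intervalIntegrable _ _)]
  exact intervalIntegral.integral_congr fun x _ => intervalIntegral.integral_add
    (Continuous.intervalIntegrable (by fun_prop) _ _)
    (Continuous.intervalIntegrable (by fun_prop) _ _)

theorem sum_sum_integral_integral_adjacent (hf : Continuous f) (s t : ℕ → ℝ) (m n : ℕ) :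
    ∑ i ∈ Finset.range m, ∑ j ∈ Finset.range n,
        ∫ x in s i..s (i + 1), ∫ y in t j..t (j + 1), f (x, y) =
      ∫ x in s 0..s m, ∫ y in t 0..t n, f (x, y) := by
  rw [← intervalIntegral.sum_integral_adjacent_intervals fun k _ =>
    (continuous_integral_snd hf _ _).intervalIntegrable (s k) (s (k + 1))]
  refine Finset.sum_congr rfl fun i _ => ?_
  rw [← intervalIntegral.integral_finsetSum fun j _ =>
    (continuous_integral_snd hf _ _).intervalIntegrable _ _]
  exact intervalIntegral.integral_congr fun x _ =>
    intervalIntegral.sum_integral_adjacent_intervals fun k _ =>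
      Continuous.intervalIntegrable (by fun_prop) (t k) (t (k + 1))

theorem integral_integral_eq_add_four (hf : Continuous f) (a b c : ℝ) :
    ∫ x in a..c, ∫ y in a..c, f (x, y) =
      (∫ x in a..b, ∫ y in a..b, f (x, y)) + (∫ x in a..b, ∫ y in b..c, f (x, y)) +
      ((∫ x in b..c, ∫ y in a..b, f (x, y)) + ∫ x in b..c, ∫ y in b..c, f (x, y)) := by
  have := sum_sum_integral_integral_adjacent hf (fun k => [a, b, c].getD k c)
    (fun k => [a, b, c].getD k c) 2 2
  simpa [Finset.sum_range_succ] using this.symm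

theorem integral_integral_const_fst (g : ℝ → ℝ) (a b c d : ℝ) :
    ∫ _ in a..b, ∫ y in c..d, g y = (b - a) * ∫ y in c..d, g y := by
  rw [intervalIntegral.integral_const, smul_eq_mul]

theorem integral_integral_const_snd (g : ℝ → ℝ) (a b c d : ℝ) :
    ∫ x in a..b, ∫ _ in c..d, g x = (d - c) * ∫ x in a..b, g x := by
  simp only [intervalIntegral.integral_const, smul_eq_mul, intervalIntegral.integral_const_mul]

theorem integral_integral_le_strips_add {A B : ℝ → ℝ} (hf : Continuous f) (hA : Continuous A)
    (hB : Continuous B) (hA0 : ∀ y, 0 ≤ A y) (hB0 : ∀ x, 0 ≤ B x)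
    (hfA : ∀ x y, 0 ≤ x → x ≤ y → y ≤ 1 → f (x, y) ≤ A y)
    (hfB : ∀ x y, 0 ≤ y → y ≤ x → x ≤ 1 → f (x, y) ≤ B x) {h : ℝ} (h0 : 0 ≤ h) (h1 : h ≤ 1) :
    ∫ x in (0 : ℝ)..1, ∫ y in (0 : ℝ)..1, f (x, y) ≤
      h * ((∫ y in (0 : ℝ)..1, A y) + ∫ x in (0 : ℝ)..1, B x) +
        ∫ x in h..1, ∫ y in h..1, f (x, y) := by
  have hcorner := integral_integral_mono_on (g := fun p => A p.2 + B p.1) hf (by fun_prop) h0 h0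
    fun x hx y hy => (le_total x y).elim
      (fun hxy => (hfA x y hx.1 hxy (hy.2.trans h1)).trans (le_add_of_nonneg_right (hB0 x)))
      (fun hyx => (hfB x y hy.1 hyx (hx.2.trans h1)).trans (le_add_of_nonneg_left (hA0 y)))
  have hleft := integral_integral_mono_on (g := fun p => A p.2) hf (by fun_prop) h0 h1
    fun x hx y hy => hfA x y hx.1 (hx.2.trans hy.1) hy.2
  have hbottom := integral_integral_mono_on (g := fun p => B p.1) hf (by fun_prop) h1 h0
    fun x hx y hy => hfB x y hy.1 (hy.2.trans hx.1) hx.2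
  rw [integral_integral_add (f := fun p => A p.2) (g := fun p => B p.1) (by fun_prop)
    (by fun_prop), integral_integral_const_fst, integral_integral_const_snd] at hcorner
  rw [integral_integral_const_fst] at hleft
  rw [integral_integral_const_snd] at hbottom
  rw [integral_integral_eq_add_four hf 0 h 1,
    ← intervalIntegral.integral_add_adjacent_intervals (hA.intervalIntegrable 0 h)
      (hA.intervalIntegrable h 1),
    ← intervalIntegral.integral_add_adjacent_intervals (hB.intervalIntegrable 0 h)
      (hB.intervalIntegrable h 1)]
  linarith

end IteratedIntegral

section PartialDerivatives

variable {φ : ℝ × ℝ → ℝ}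

theorem hasDerivAt_pdx (hφ : Differentiable ℝ φ) (x y : ℝ) :
    HasDerivAt (fun s => φ (s, y)) (pdx φ (x, y)) x :=
  (hφ (x, y)).hasFDerivAt.comp_hasDerivAt x ((hasDerivAt_id x).prodMk (hasDerivAt_const x y))

theorem hasDerivAt_pdy (hφ : Differentiable ℝ φ) (x y : ℝ) :
    HasDerivAt (fun s => φ (x, s)) (pdy φ (x, y)) y :=
  (hφ (x, y)).hasFDerivAt.comp_hasDerivAt y ((hasDerivAt_const y x).prodMk (hasDerivAt_id y))

theorem continuous_pdx (hφ : ContDiff ℝ 1 φ) : Continuous (pdx φ) :=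
  (hφ.continuous_fderiv one_ne_zero).clm_apply continuous_const

theorem continuous_pdy (hφ : ContDiff ℝ 1 φ) : Continuous (pdy φ) :=
  (hφ.continuous_fderiv one_ne_zero).clm_apply continuous_const

theorem sq_integral_sub_integral_le (hφ : ContDiff ℝ 1 φ) {a b c d x t : ℝ}
    (hcd : c ≤ d) (hx : x ∈ Icc a b) (ht : t ∈ Icc a b) :
    ((∫ y in c..d, φ (x, y)) - ∫ y in c..d, φ (t, y)) ^ 2 ≤
      (d - c) * ((b - a) * ∫ x in a..b, ∫ y in c..d, pdx φ (x, y) ^ 2) := by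
  have hcont := hφ.continuous
  have hcontx := continuous_pdx hφ
  have hsq : Continuous fun p => pdx φ p ^ 2 := by fun_prop
  rw [← intervalIntegral.integral_sub (Continuous.intervalIntegrable (by fun_prop) _ _)
    (Continuous.intervalIntegrable (by fun_prop) _ _)]
  refine (sq_integral_le_mul_integral_sq (by fun_prop) hcd).trans
    (mul_le_mul_of_nonneg_left ?_ (sub_nonneg.2 hcd))
  rw [integral_integral_comm hsq (hx.1.trans hx.2) hcd, ← intervalIntegral.integral_const_mul]
  exact intervalIntegral.integral_mono_on hcd (Continuous.intervalIntegrable (by fun_prop) _ _)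
    ((continuous_integral_fst hsq a b).const_mul _ |>.intervalIntegrable _ _) fun y _ =>
      sq_sub_le_mul_integral_deriv_sq
        (fun s => hasDerivAt_pdx (hφ.differentiable one_ne_zero) s y) (by fun_prop) hx ht

theorem sq_mul_integral_sq_le_of_square (hφ : ContDiff ℝ 1 φ) {a b c d l : ℝ} (hl : 0 ≤ l)
    (hab : b - a = l) (hcd : d - c = l) :
    l ^ 2 * ∫ x in a..b, ∫ y in c..d, φ (x, y) ^ 2 ≤
      (∫ x in a..b, ∫ y in c..d, φ (x, y)) ^ 2 +
      l ^ 4 / 2 * ((∫ x in a..b, ∫ y in c..d, pdx φ (x, y) ^ 2) +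
        ∫ x in a..b, ∫ y in c..d, pdy φ (x, y) ^ 2) := by
  have hab' : a ≤ b := by linarith
  have hcd' : c ≤ d := by linarith
  have hcont := continuous_integral_snd hφ.continuous c d
  have hcontysq := continuous_integral_snd ((continuous_pdy hφ).pow 2) c d
  have hvertical : l * ∫ x in a..b, ∫ y in c..d, φ (x, y) ^ 2 ≤
      (∫ x in a..b, (∫ y in c..d, φ (x, y)) ^ 2) +
        l ^ 3 / 2 * ∫ x in a..b, ∫ y in c..d, pdy φ (x, y) ^ 2 := by
    rw [← intervalIntegral.integral_const_mul, ← intervalIntegral.integral_const_mul,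
      ← intervalIntegral.integral_add (Continuous.intervalIntegrable (by fun_prop) _ _)
        (Continuous.intervalIntegrable (by fun_prop) _ _)]
    refine intervalIntegral.integral_mono_on hab'
      (Continuous.intervalIntegrable (by fun_prop) _ _)
      (Continuous.intervalIntegrable (by fun_prop) _ _) fun x _ => ?_
    rw [← hcd]
    exact mul_integral_sq_le_integral_deriv_sq
      (hasDerivAt_pdy (hφ.differentiable one_ne_zero) x)
      ((continuous_pdy hφ).comp (Continuous.prodMk_right x)) hcd'
  have hhorizontal := mul_integral_sq_le_of_sq_sub_le hcont hab' fun x hx t ht =>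
    sq_integral_sub_integral_le hφ hcd' hx ht
  rw [hab, hcd] at hhorizontal
  linear_combination l * hvertical + hhorizontal

theorem sq_mul_integral_sq_le_sum_cells (hφ : ContDiff ℝ 1 φ) (a : ℝ) {l : ℝ} (hl : 0 ≤ l)
    (n : ℕ) :
    l ^ 2 * ∫ x in a..a + n * l, ∫ y in a..a + n * l, φ (x, y) ^ 2 ≤
      (∑ i ∈ Finset.range n, ∑ j ∈ Finset.range n,
        (∫ x in a + i * l..a + (i + 1) * l, ∫ y in a + j * l..a + (j + 1) * l, φ (x, y)) ^ 2) +
      l ^ 4 / 2 * ((∫ x in a..a + n * l, ∫ y in a..a + n * l, pdx φ (x, y) ^ 2) +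
        ∫ x in a..a + n * l, ∫ y in a..a + n * l, pdy φ (x, y) ^ 2) := by
  have hsum {g : ℝ × ℝ → ℝ} (hg : Continuous g) := sum_sum_integral_integral_adjacent hg
    (fun k => a + k * l) (fun k => a + k * l) n n
  simp only [Nat.cast_zero, zero_mul, add_zero, Nat.cast_add, Nat.cast_one] at hsum
  rw [← hsum (g := fun p => φ p ^ 2) (hφ.continuous.pow 2),
    ← hsum (g := fun p => pdx φ p ^ 2) ((continuous_pdx hφ).pow 2),
    ← hsum (g := fun p => pdy φ p ^ 2) ((continuous_pdy hφ).pow 2)]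
  simp only [Finset.mul_sum, ← Finset.sum_add_distrib]
  exact Finset.sum_le_sum fun i _ => Finset.sum_le_sum fun j _ =>
    sq_mul_integral_sq_le_of_square hφ hl (by ring) (by ring)

variable {wx wy : ℝ × ℝ → ℝ}

theorem integral_sq_le_strips_add (hφ : ContDiff ℝ 1 φ) (hwx : Continuous wx) (hwy : Continuous wy)
    (hφ0 : ∀ y, φ (0, y) = 0) (hφ0' : ∀ x, φ (x, 0) = 0)
    (hx : ∀ x y, 0 ≤ y → y * pdx φ (x, y) ^ 2 ≤ wx (x, y) ^ 2)
    (hy : ∀ x y, 0 ≤ x → x * pdy φ (x, y) ^ 2 ≤ wy (x, y) ^ 2) {h : ℝ} (h0 : 0 ≤ h) (h1 : h ≤ 1) :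
    ∫ x in (0 : ℝ)..1, ∫ y in (0 : ℝ)..1, φ (x, y) ^ 2 ≤
      h * ((∫ x in (0 : ℝ)..1, ∫ y in (0 : ℝ)..1, wx (x, y) ^ 2) +
        ∫ x in (0 : ℝ)..1, ∫ y in (0 : ℝ)..1, wy (x, y) ^ 2) +
      ∫ x in h..1, ∫ y in h..1, φ (x, y) ^ 2 := by
  have hdiff := hφ.differentiable one_ne_zero
  have hcontx := continuous_pdx hφ
  have hconty := continuous_pdy hφ
  have hwxsq : Continuous fun p => wx p ^ 2 := by fun_prop
  have hwysq : Continuous fun p => wy p ^ 2 := by fun_prop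
  rw [integral_integral_comm hwxsq zero_le_one zero_le_one]
  exact integral_integral_le_strips_add (f := fun p => φ p ^ 2) (hφ.continuous.pow 2)
    (continuous_integral_fst hwxsq 0 1) (continuous_integral_snd hwysq 0 1)
    (fun y => intervalIntegral.integral_nonneg zero_le_one fun x _ => sq_nonneg _)
    (fun x => intervalIntegral.integral_nonneg zero_le_one fun y _ => sq_nonneg _)
    (fun x y hx0 hxy hy1 => sq_le_integral_sq_of_mul_deriv_sq_le
      (fun s => hasDerivAt_pdx hdiff s y) (by fun_prop) (by fun_prop) (hφ0 y) hx0 hxy hy1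
      fun s => hx s y (hx0.trans hxy))
    (fun x y hy0 hyx hx1 => sq_le_integral_sq_of_mul_deriv_sq_le
      (fun s => hasDerivAt_pdy hdiff x s) (by fun_prop) (by fun_prop) (hφ0' x) hy0 hyx hx1
      fun s => hy x s (hy0.trans hyx))
    h0 h1

theorem mul_integral_sq_le_of_mul_sq_le {f w : ℝ × ℝ → ℝ} (hf : Continuous f) (hw : Continuous w)
    {h : ℝ} (h0 : 0 ≤ h) (h1 : h ≤ 1)
    (hfw : ∀ x ∈ Icc h 1, ∀ y ∈ Icc h 1, h * f (x, y) ^ 2 ≤ w (x, y) ^ 2) :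
    h * ∫ x in h..1, ∫ y in h..1, f (x, y) ^ 2 ≤
      ∫ x in (0 : ℝ)..1, ∫ y in (0 : ℝ)..1, w (x, y) ^ 2 := by
  have hwsq : Continuous fun p => w p ^ 2 := by fun_prop
  have hmono := integral_integral_mono_on (f := fun p => h * f p ^ 2) (by fun_prop) hwsq h1 h1 hfw
  simp only [intervalIntegral.integral_const_mul] at hmono
  have hsplit := integral_integral_eq_add_four hwsq 0 h 1
  linarith [integral_integral_nonneg h0 h0 (f := fun p => w p ^ 2) fun _ => sq_nonneg _,
    integral_integral_nonneg h0 h1 (f := fun p => w p ^ 2) fun _ => sq_nonneg _,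
    integral_integral_nonneg h1 h0 (f := fun p => w p ^ 2) fun _ => sq_nonneg _]

theorem integral_sq_le_add_sum_cells (hφ : ContDiff ℝ 1 φ) (hwx : Continuous wx)
    (hwy : Continuous wy) (hφ0 : ∀ y, φ (0, y) = 0) (hφ0' : ∀ x, φ (x, 0) = 0)
    (hx : ∀ x y, 0 ≤ y → y * pdx φ (x, y) ^ 2 ≤ wx (x, y) ^ 2)
    (hy : ∀ x y, 0 ≤ x → x * pdy φ (x, y) ^ 2 ≤ wy (x, y) ^ 2) {h l : ℝ} (h0 : 0 < h)
    (hl : 0 < l) (hlh : l ≤ h) {n : ℕ} (hn : h + n * l = 1) :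
    ∫ x in (0 : ℝ)..1, ∫ y in (0 : ℝ)..1, φ (x, y) ^ 2 ≤
      2 * h * ((∫ x in (0 : ℝ)..1, ∫ y in (0 : ℝ)..1, wx (x, y) ^ 2) +
        ∫ x in (0 : ℝ)..1, ∫ y in (0 : ℝ)..1, wy (x, y) ^ 2) +
      (l ^ 2)⁻¹ * ∑ i ∈ Finset.range n, ∑ j ∈ Finset.range n,
        (∫ x in h + i * l..h + (i + 1) * l, ∫ y in h + j * l..h + (j + 1) * l, φ (x, y)) ^ 2 := by
  have h1 : h ≤ 1 := by rw [← hn]; exact le_add_of_nonneg_right (by positivity)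
  have hstrips := integral_sq_le_strips_add hφ hwx hwy hφ0 hφ0' hx hy h0.le h1
  have hcells := sq_mul_integral_sq_le_sum_cells hφ h hl.le n
  have hwx' := mul_integral_sq_le_of_mul_sq_le (continuous_pdx hφ) hwx h0.le h1
    fun x _ y hy' => (mul_le_mul_of_nonneg_right hy'.1 (sq_nonneg _)).trans
      (hx x y (h0.le.trans hy'.1))
  have hwy' := mul_integral_sq_le_of_mul_sq_le (continuous_pdy hφ) hwy h0.le h1
    fun x hx' y _ => (mul_le_mul_of_nonneg_right hx'.1 (sq_nonneg _)).trans
      (hy x y (h0.le.trans hx'.1))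
  rw [hn] at hcells
  set E := (∫ x in (0 : ℝ)..1, ∫ y in (0 : ℝ)..1, wx (x, y) ^ 2) +
    ∫ x in (0 : ℝ)..1, ∫ y in (0 : ℝ)..1, wy (x, y) ^ 2
  set D := (∫ x in h..1, ∫ y in h..1, pdx φ (x, y) ^ 2) +
    ∫ x in h..1, ∫ y in h..1, pdy φ (x, y) ^ 2
  set S := ∑ i ∈ Finset.range n, ∑ j ∈ Finset.range n,
    (∫ x in h + i * l..h + (i + 1) * l, ∫ y in h + j * l..h + (j + 1) * l, φ (x, y)) ^ 2
  have hD0 : 0 ≤ D := add_nonneg (integral_integral_nonneg h1 h1 fun _ => sq_nonneg _)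
    (integral_integral_nonneg h1 h1 fun _ => sq_nonneg _)
  have hDE : l ^ 2 * D ≤ h * E := calc
    l ^ 2 * D ≤ h ^ 2 * D := by gcongr
    _ = h * (h * D) := by ring
    _ ≤ h * E := by gcongr; linarith
  have hinner : ∫ x in h..1, ∫ y in h..1, φ (x, y) ^ 2 ≤ (l ^ 2)⁻¹ * S + l ^ 2 / 2 * D := by
    rw [← mul_le_mul_iff_of_pos_left (pow_pos hl 2)]
    refine hcells.trans_eq ?_
    field_simp
  have hE0 : 0 ≤ h * E := (mul_nonneg (sq_nonneg l) hD0).trans hDE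
  linarith

end PartialDerivatives

/-! ### Test functions and `L²` spaces -/

section LpSpaces

open scoped ENNReal Topology

variable {X : Type*} [MeasurableSpace X] {μ : Measure X}

theorem inner_eq_integral_mul {F G : Lp ℝ 2 μ} {f g : X → ℝ} (hF : F =ᵐ[μ] f) (hG : G =ᵐ[μ] g) :
    inner ℝ F G = ∫ x, f x * g x ∂μ := by
  rw [L2.inner_def]
  refine integral_congr_ae ?_
  filter_upwards [hF, hG] with x hFx hGx
  rw [hFx, hGx, Real.inner_apply]

theorem norm_sq_eq_integral_sq {F : Lp ℝ 2 μ} {f : X → ℝ} (hF : F =ᵐ[μ] f) :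
    ‖F‖ ^ 2 = ∫ x, f x ^ 2 ∂μ := by
  rw [← real_inner_self_eq_norm_sq, inner_eq_integral_mul hF hF]
  simp only [sq]

theorem coeFn_sum_smul_ae_eq {p : ℝ≥0∞} {ι : Type*} [Fintype ι] (c : ι → ℝ)
    {F : ι → Lp ℝ p μ} {f : ι → X → ℝ} (hF : ∀ i, F i =ᵐ[μ] f i) :
    (∑ i, c i • F i : Lp ℝ p μ) =ᵐ[μ] fun x => ∑ i, c i * f i x := by
  filter_upwards [Lp.coeFn_finsetSum Finset.univ fun i => c i • F i,
    ae_all_iff.2 fun i => Lp.coeFn_smul (c i) (F i), ae_all_iff.2 hF] with x hsum hsmul hx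
  simp only [hsum, Finset.sum_apply, hsmul, Pi.smul_apply, hx, smul_eq_mul]

/-- The graph in `Lᵖ × Lᵖ` of the maximal operator of multiplication by the function `m`. -/
def mulGraph (μ : Measure X) (p : ℝ≥0∞) (m : X → ℝ) : Submodule ℝ (Lp ℝ p μ × Lp ℝ p μ) where
  carrier := {F | F.2 =ᵐ[μ] fun x => m x * F.1 x}
  zero_mem' := by
    filter_upwards [Lp.coeFn_zero ℝ p μ] with x hx
    simp only [Prod.fst_zero, Prod.snd_zero, hx, Pi.zero_apply, mul_zero]
  add_mem' {F G} hF hG := by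
    filter_upwards [hF, hG, Lp.coeFn_add F.1 G.1, Lp.coeFn_add F.2 G.2] with x hFx hGx h₁ h₂
    simp only [Prod.fst_add, Prod.snd_add, h₁, h₂, Pi.add_apply, hFx, hGx, mul_add]
  smul_mem' c F hF := by
    filter_upwards [hF, Lp.coeFn_smul c F.1, Lp.coeFn_smul c F.2] with x hFx h₁ h₂
    simp only [Prod.smul_fst, Prod.smul_snd, h₁, h₂, Pi.smul_apply, hFx, smul_eq_mul,
      mul_left_comm]

theorem isClosed_mulGraph {p : ℝ≥0∞} [Fact (1 ≤ p)] (m : X → ℝ) :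
    IsClosed (mulGraph μ p m : Set (Lp ℝ p μ × Lp ℝ p μ)) := by
  refine IsSeqClosed.isClosed fun F G hF hFG => ?_
  obtain ⟨hFG₁, hFG₂⟩ := Prod.tendsto_iff _ _ |>.1 hFG
  obtain ⟨ns, hns, hae₁⟩ := (tendstoInMeasure_of_tendsto_Lp hFG₁).exists_seq_tendsto_ae
  obtain ⟨ms, hms, hae₂⟩ :=
    (tendstoInMeasure_of_tendsto_Lp (hFG₂.comp hns.tendsto_atTop)).exists_seq_tendsto_ae
  filter_upwards [hae₁, hae₂, ae_all_iff.2 hF] with x hx₁ hx₂ hx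
  refine tendsto_nhds_unique hx₂
    (((hx₁.comp hms.tendsto_atTop).const_mul (m x)).congr fun k => (hx _).symm)

theorem not_finiteDimensional_Lp_two_restrict [TopologicalSpace X] [T2Space X] [BorelSpace X]
    [μ.IsOpenPosMeasure] {s : Set X} (hs : IsOpen s) (hsinf : s.Infinite) (hμs : μ s ≠ ∞) :
    ¬ FiniteDimensional ℝ (Lp ℝ 2 (μ.restrict s)) := by
  intro hfin
  have := hsinf.to_subtype
  obtain ⟨U, hUinf, hUo, hUd⟩ := exists_seq_infinite_isOpen_pairwise_disjoint s
  let T (n : ℕ) : Set X := (↑) '' U n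
  have hTs (n : ℕ) : T n ⊆ s := Subtype.coe_image_subset s (U n)
  have hTo (n : ℕ) : IsOpen (T n) := hs.isOpenMap_subtype_val _ (hUo n)
  have hTd : Pairwise fun m n => Disjoint (T m) (T n) := fun m n hmn =>
    (disjoint_image_iff Subtype.val_injective).2 (hUd hmn)
  have hTfin (n : ℕ) : μ.restrict s (T n) ≠ ∞ :=
    measure_ne_top_of_subset (subset_univ _) (by rwa [Measure.restrict_apply_univ])
  have hTpos (n : ℕ) : (μ.restrict s).real (T n) ≠ 0 := by
    rw [measureReal_restrict_apply (hTo n).measurableSet, inter_eq_left.2 (hTs n)]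
    exact (ENNReal.toReal_pos ((hTo n).measure_pos μ ((hUinf n).nonempty.image _)).ne'
      (measure_ne_top_of_subset (hTs n) hμs)).ne'
  have hinner (m n : ℕ) := L2.real_inner_indicatorConstLp_one_indicatorConstLp_one
    (hTo m).measurableSet (hTo n).measurableSet (hTfin m) (hTfin n)
  have hli : LinearIndependent ℝ fun n =>
      indicatorConstLp 2 (hTo n).measurableSet (hTfin n) (1 : ℝ) := by
    refine linearIndependent_of_ne_zero_of_inner_eq_zero (fun n hn => hTpos n ?_)
      fun m n hmn => ?_
    · rw [← inter_self (T n), ← hinner, hn, inner_zero_left]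
    · exact (hinner m n).trans (by rw [(hTd hmn).inter_eq, measureReal_empty])
  have := hli.finite
  exact not_finite ℕ

end LpSpaces

namespace IsTestOn

variable {s : Set (ℝ × ℝ)} {φ ψ : ℝ × ℝ → ℝ}

theorem zero : IsTestOn s 0 :=
  ⟨contDiff_const, .zero, by simp only [tsupport_zero, empty_subset]⟩

theorem add (hφ : IsTestOn s φ) (hψ : IsTestOn s ψ) : IsTestOn s (φ + ψ) :=
  ⟨hφ.1.add hψ.1, hφ.2.1.add hψ.2.1, (tsupport_add φ ψ).trans (union_subset hφ.2.2 hψ.2.2)⟩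

theorem const_smul (c : ℝ) (hφ : IsTestOn s φ) : IsTestOn s (c • φ) :=
  ⟨hφ.1.const_smul c, hφ.2.1.smul_left, (tsupport_smul_subset_right (fun _ => c) φ).trans hφ.2.2⟩

theorem differentiable (hφ : IsTestOn s φ) : Differentiable ℝ φ :=
  hφ.1.differentiable (by simp)

theorem eq_zero_of_notMem (hφ : IsTestOn s φ) {p : ℝ × ℝ} (hp : p ∉ s) : φ p = 0 :=
  image_eq_zero_of_notMem_tsupport fun h => hp (hφ.2.2 h)

theorem fderiv_apply (hφ : IsTestOn s φ) (e : ℝ × ℝ) : IsTestOn s fun p => fderiv ℝ φ p e :=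
  ⟨(hφ.1.fderiv_right le_rfl).clm_apply contDiff_const, hφ.2.1.fderiv_apply (𝕜 := ℝ) e,
    (tsupport_fderiv_apply_subset ℝ e).trans hφ.2.2⟩

theorem continuous_mul {m : ℝ × ℝ → ℝ} (hφ : IsTestOn s φ) (hs : IsOpen s)
    (hm : ContinuousOn m s) : Continuous fun p => m p * φ p :=
  (hm.mul hφ.1.continuous.continuousOn).continuous_of_tsupport_subset hs
    ((tsupport_mul_subset_right (f := m)).trans hφ.2.2)

theorem memLp_mul {m : ℝ × ℝ → ℝ} (hφ : IsTestOn s φ) (hs : IsOpen s) (hm : ContinuousOn m s) :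
    MemLp (fun p => m p * φ p) 2 (volume.restrict s) :=
  (hφ.continuous_mul hs hm).memLp_of_hasCompactSupport hφ.2.1.mul_left

theorem memLp (hφ : IsTestOn s φ) : MemLp φ 2 (volume.restrict s) :=
  hφ.1.continuous.memLp_of_hasCompactSupport hφ.2.1

theorem setIntegral_mul_fderiv (hφ : IsTestOn s φ) (hψ : IsTestOn s ψ) (e : ℝ × ℝ) :
    ∫ p in s, φ p * fderiv ℝ ψ p e = -∫ p in s, fderiv ℝ φ p e * ψ p := by
  rw [setIntegral_eq_integral_of_forall_compl_eq_zero fun p hp => by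
      rw [hφ.eq_zero_of_notMem hp, zero_mul],
    setIntegral_eq_integral_of_forall_compl_eq_zero fun p hp => by
      rw [hψ.eq_zero_of_notMem hp, mul_zero]]
  have hφ' := (hφ.fderiv_apply e).1.continuous
  have hψ' := (hψ.fderiv_apply e).1.continuous
  exact integral_mul_fderiv_eq_neg_fderiv_mul_of_integrable
    ((hφ'.mul hψ.1.continuous).integrable_of_hasCompactSupport hψ.2.1.mul_left)
    ((hφ.1.continuous.mul hψ').integrable_of_hasCompactSupport hφ.2.1.mul_right)
    ((hφ.1.continuous.mul hψ.1.continuous).integrable_of_hasCompactSupport hφ.2.1.mul_right)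
    (fun p _ => hφ.differentiable p) fun p _ => hψ.differentiable p

end IsTestOn

theorem pdx_zero : pdx 0 = 0 := by
  ext p
  simp only [pdx, fderiv_zero, Pi.zero_apply, zero_apply]

theorem pdy_zero : pdy 0 = 0 := by
  ext p
  simp only [pdy, fderiv_zero, Pi.zero_apply, zero_apply]

theorem pdx_add {φ ψ : ℝ × ℝ → ℝ} (hφ : Differentiable ℝ φ) (hψ : Differentiable ℝ ψ) :
    pdx (φ + ψ) = pdx φ + pdx ψ := by
  ext p
  simp only [pdx, fderiv_add (hφ p) (hψ p), add_apply, Pi.add_apply]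

theorem pdy_add {φ ψ : ℝ × ℝ → ℝ} (hφ : Differentiable ℝ φ) (hψ : Differentiable ℝ ψ) :
    pdy (φ + ψ) = pdy φ + pdy ψ := by
  ext p
  simp only [pdy, fderiv_add (hφ p) (hψ p), add_apply, Pi.add_apply]

theorem pdx_const_smul (c : ℝ) (φ : ℝ × ℝ → ℝ) : pdx (c • φ) = c • pdx φ := by
  ext p
  simp only [pdx, fderiv_const_smul_field, smul_apply, Pi.smul_apply]

theorem pdy_const_smul (c : ℝ) (φ : ℝ × ℝ → ℝ) : pdy (c • φ) = c • pdy φ := by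
  ext p
  simp only [pdy, fderiv_const_smul_field, smul_apply, Pi.smul_apply]

theorem Lp_two_eq_zero_of_integral_mul_test_eq_zero {s : Set (ℝ × ℝ)} (hs : IsOpen s)
    (f : Lp ℝ 2 (volume.restrict s)) (hf : ∀ φ, IsTestOn s φ → ∫ p in s, f p * φ p = 0) :
    f = 0 := by
  have hloc : LocallyIntegrableOn f s volume :=
    locallyIntegrableOn_of_locallyIntegrable_restrict ((Lp.memLp f).locallyIntegrable (by norm_num))
  rw [Lp.eq_zero_iff_ae_eq_zero, EventuallyEq, ae_restrict_iff' hs.measurableSet]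
  refine hs.ae_eq_zero_of_integral_contDiff_smul_eq_zero hloc fun φ hφ hφc hφs => ?_
  have hφ' : IsTestOn s φ := ⟨hφ, hφc, hφs⟩
  rw [← hf φ hφ', setIntegral_eq_integral_of_forall_compl_eq_zero fun p hp => by
    rw [hφ'.eq_zero_of_notMem hp, mul_zero]]
  simp only [smul_eq_mul, mul_comm]

theorem integral_mul_fderiv_of_mem_closure {s : Set (ℝ × ℝ)} (hs : IsOpen s) {m : ℝ × ℝ → ℝ}
    (hm : ContinuousOn m s) (hm0 : ∀ p ∈ s, m p ≠ 0) (e : ℝ × ℝ)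
    {D : Set (Lp ℝ 2 (volume.restrict s) × Lp ℝ 2 (volume.restrict s))}
    (hD : ∀ F ∈ D, ∃ φ, IsTestOn s φ ∧ F.1 =ᵐ[volume.restrict s] φ ∧
      F.2 =ᵐ[volume.restrict s] fun p => m p * fderiv ℝ φ p e)
    {F : Lp ℝ 2 (volume.restrict s) × Lp ℝ 2 (volume.restrict s)} (hF : F ∈ closure D)
    {u g : ℝ × ℝ → ℝ} (hu : F.1 =ᵐ[volume.restrict s] u)
    (hg : F.2 =ᵐ[volume.restrict s] fun p => m p * g p) {ψ : ℝ × ℝ → ℝ} (hψ : IsTestOn s ψ) :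
    ∫ p in s, u p * fderiv ℝ ψ p e = -∫ p in s, g p * ψ p := by
  let a := (hψ.fderiv_apply e).memLp.toLp
  have hminv : ContinuousOn (fun p => (m p)⁻¹) s := hm.inv₀ hm0
  let b := (hψ.memLp_mul hs hminv).toLp
  have hcancel (f : ℝ × ℝ → ℝ) :
      ∫ p in s, m p * f p * ((m p)⁻¹ * ψ p) = ∫ p in s, f p * ψ p := by
    refine setIntegral_congr_fun hs.measurableSet fun p hp => ?_
    have := hm0 p hp
    field_simp
  have hclosed : IsClosed {G : Lp ℝ 2 (volume.restrict s) × Lp ℝ 2 (volume.restrict s) |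
      inner ℝ G.1 a = -inner ℝ G.2 b} :=
    isClosed_eq (continuous_fst.inner continuous_const) (continuous_snd.inner continuous_const).neg
  have hFab : inner ℝ F.1 a = -inner ℝ F.2 b := by
    refine closure_minimal (fun G hG => ?_) hclosed hF
    obtain ⟨φ, hφ, h₁, h₂⟩ := hD G hG
    rw [mem_ofPred_eq, inner_eq_integral_mul h₁ (MemLp.coeFn_toLp _),
      inner_eq_integral_mul h₂ (MemLp.coeFn_toLp _), hcancel, hφ.setIntegral_mul_fderiv hψ]
  rwa [inner_eq_integral_mul hu (MemLp.coeFn_toLp _),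
    inner_eq_integral_mul hg (MemLp.coeFn_toLp _), hcancel] at hFab

theorem isOpen_Omega : IsOpen Omega := isOpen_Ioo.prod isOpen_Ioo

theorem volume_Omega : volume Omega = 1 := by
  rw [Omega, Measure.volume_eq_prod, Measure.prod_prod, Real.volume_Ioo]
  norm_num

instance isFiniteMeasure_restrict_Omega : IsFiniteMeasure (volume.restrict Omega) :=
  ⟨by rw [Measure.restrict_apply_univ, volume_Omega]; exact ENNReal.one_lt_top⟩

theorem infinite_Omega : Omega.Infinite :=
  (Ioo_infinite zero_lt_one).prod_left (nonempty_Ioo.2 zero_lt_one)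

theorem continuousOn_snd_rpow (α : ℝ) : ContinuousOn (fun p : ℝ × ℝ => p.2 ^ α) Omega :=
  continuousOn_snd.rpow_const fun _ hp => Or.inl hp.2.1.ne'

theorem continuousOn_fst_rpow (α : ℝ) : ContinuousOn (fun p : ℝ × ℝ => p.1 ^ α) Omega :=
  continuousOn_fst.rpow_const fun _ hp => Or.inl hp.1.1.ne'

theorem snd_rpow_ne_zero (α : ℝ) : ∀ p ∈ Omega, p.2 ^ α ≠ 0 :=
  fun _ hp => (Real.rpow_pos_of_pos hp.2.1 α).ne'

theorem fst_rpow_ne_zero (α : ℝ) : ∀ p ∈ Omega, p.1 ^ α ≠ 0 :=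
  fun _ hp => (Real.rpow_pos_of_pos hp.1.1 α).ne'

/-! ### Weighted jets -/

/-- The space `L²(Ω)`. -/
abbrev L2Omega : Type := Lp ℝ 2 (volume.restrict Omega)

/-- The Hilbert space `L²(Ω)³`, in which `u ∈ 𝓗¹(Ω)` is encoded by its weighted jet
`(u, y^α₁ ∂ₓu, x^α₂ ∂_yu)`. -/
abbrev Jet : Type := PiLp 2 fun _ : Fin 3 => L2Omega

/-- `F` is the weighted jet of the function `u` with partial derivatives `gx` and `gy`. -/
structure IsJet (α₁ α₂ : ℝ) (F : Jet) (u gx gy : ℝ × ℝ → ℝ) : Prop where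
  val : F 0 =ᵐ[volume.restrict Omega] u
  dx : F 1 =ᵐ[volume.restrict Omega] fun p => p.2 ^ α₁ * gx p
  dy : F 2 =ᵐ[volume.restrict Omega] fun p => p.1 ^ α₂ * gy p

section Jets

variable {α₁ α₂ : ℝ} {F G : Jet} {u gx gy v hx hy : ℝ × ℝ → ℝ}

theorem exists_isJet_of_memLp (hu : MemLp u 2 (volume.restrict Omega))
    (hgx : MemLp (fun p => p.2 ^ α₁ * gx p) 2 (volume.restrict Omega))
    (hgy : MemLp (fun p => p.1 ^ α₂ * gy p) 2 (volume.restrict Omega)) :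
    ∃ F : Jet, IsJet α₁ α₂ F u gx gy :=
  ⟨WithLp.toLp 2 ![hu.toLp, hgx.toLp, hgy.toLp], hu.coeFn_toLp, hgx.coeFn_toLp, hgy.coeFn_toLp⟩

theorem exists_isJet (α₁ α₂ : ℝ) (F : Jet) : ∃ u gx gy, IsJet α₁ α₂ F u gx gy := by
  refine ⟨F 0, fun p => (p.2 ^ α₁)⁻¹ * F 1 p, fun p => (p.1 ^ α₂)⁻¹ * F 2 p, .rfl, ?_, ?_⟩
  · filter_upwards [ae_restrict_mem isOpen_Omega.measurableSet] with p hp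
    rw [mul_inv_cancel_left₀ (snd_rpow_ne_zero α₁ p hp)]
  · filter_upwards [ae_restrict_mem isOpen_Omega.measurableSet] with p hp
    rw [mul_inv_cancel_left₀ (fst_rpow_ne_zero α₂ p hp)]

theorem IsTestOn.exists_isJet (α₁ α₂ : ℝ) {φ : ℝ × ℝ → ℝ} (hφ : IsTestOn Omega φ) :
    ∃ F : Jet, IsJet α₁ α₂ F φ (pdx φ) (pdy φ) :=
  exists_isJet_of_memLp hφ.memLp
    ((hφ.fderiv_apply (1, 0)).memLp_mul isOpen_Omega (continuousOn_snd_rpow α₁))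
    ((hφ.fderiv_apply (0, 1)).memLp_mul isOpen_Omega (continuousOn_fst_rpow α₂))

namespace IsJet

theorem zero : IsJet α₁ α₂ 0 0 0 0 where
  val := Lp.coeFn_zero _ _ _
  dx := (Lp.coeFn_zero _ _ _).trans <| .of_eq <| by ext p; exact (mul_zero _).symm
  dy := (Lp.coeFn_zero _ _ _).trans <| .of_eq <| by ext p; exact (mul_zero _).symm

theorem add (hF : IsJet α₁ α₂ F u gx gy) (hG : IsJet α₁ α₂ G v hx hy) :
    IsJet α₁ α₂ (F + G) (u + v) (gx + hx) (gy + hy) where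
  val := (Lp.coeFn_add _ _).trans (hF.val.add hG.val)
  dx := (Lp.coeFn_add _ _).trans <| (hF.dx.add hG.dx).trans <| .of_eq <| by
    ext p; exact (mul_add _ _ _).symm
  dy := (Lp.coeFn_add _ _).trans <| (hF.dy.add hG.dy).trans <| .of_eq <| by
    ext p; exact (mul_add _ _ _).symm

theorem const_smul (c : ℝ) (hF : IsJet α₁ α₂ F u gx gy) :
    IsJet α₁ α₂ (c • F) (c • u) (c • gx) (c • gy) where
  val := (Lp.coeFn_smul _ _).trans (hF.val.const_smul c)
  dx := (Lp.coeFn_smul _ _).trans <| (hF.dx.const_smul c).trans <| .of_eq <| by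
    ext p; exact mul_left_comm _ _ _
  dy := (Lp.coeFn_smul _ _).trans <| (hF.dy.const_smul c).trans <| .of_eq <| by
    ext p; exact mul_left_comm _ _ _

theorem sub (hF : IsJet α₁ α₂ F u gx gy) (hG : IsJet α₁ α₂ G v hx hy) :
    IsJet α₁ α₂ (F - G) (u - v) (gx - hx) (gy - hy) where
  val := (Lp.coeFn_sub _ _).trans (hF.val.sub hG.val)
  dx := (Lp.coeFn_sub _ _).trans <| (hF.dx.sub hG.dx).trans <| .of_eq <| by
    ext p; exact (mul_sub _ _ _).symm
  dy := (Lp.coeFn_sub _ _).trans <| (hF.dy.sub hG.dy).trans <| .of_eq <| by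
    ext p; exact (mul_sub _ _ _).symm

theorem sum_smul {ι : Type*} [Fintype ι] (c : ι → ℝ) {F : ι → Jet} {u gx gy : ι → ℝ × ℝ → ℝ}
    (hF : ∀ i, IsJet α₁ α₂ (F i) (u i) (gx i) (gy i)) :
    IsJet α₁ α₂ (∑ i, c i • F i) (fun p => ∑ i, c i * u i p) (fun p => ∑ i, c i * gx i p)
      fun p => ∑ i, c i * gy i p := by
  have hcomp (j : Fin 3) : (∑ i, c i • F i) j = ∑ i, c i • F i j := by
    simp only [WithLp.ofLp_sum, WithLp.ofLp_smul, Finset.sum_apply, Pi.smul_apply]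
  refine ⟨?_, ?_, ?_⟩ <;> rw [hcomp]
  · exact coeFn_sum_smul_ae_eq c fun i => (hF i).val
  · simpa only [Finset.mul_sum, mul_left_comm] using coeFn_sum_smul_ae_eq c fun i => (hF i).dx
  · simpa only [Finset.mul_sum, mul_left_comm] using coeFn_sum_smul_ae_eq c fun i => (hF i).dy

theorem norm_eq_H1Norm (hF : IsJet α₁ α₂ F u gx gy) : ‖F‖ = H1Norm α₁ α₂ u gx gy := by
  rw [H1Norm, ← norm_sq_eq_integral_sq hF.val, ← norm_sq_eq_integral_sq hF.dx,
    ← norm_sq_eq_integral_sq hF.dy, PiLp.norm_eq_of_L2, Fin.sum_univ_three]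

end IsJet

/-- The jets of test functions on `Ω`. -/
def testJets (α₁ α₂ : ℝ) : Submodule ℝ Jet where
  carrier := {F | ∃ φ, IsTest φ ∧ IsJet α₁ α₂ F φ (pdx φ) (pdy φ)}
  zero_mem' := ⟨0, .zero, by simpa only [pdx_zero, pdy_zero] using IsJet.zero⟩
  add_mem' := by
    rintro F G ⟨φ, hφ, hF⟩ ⟨ψ, hψ, hG⟩
    refine ⟨φ + ψ, hφ.add hψ, ?_⟩
    simpa only [pdx_add, pdy_add, hφ.differentiable, hψ.differentiable] using hF.add hG
  smul_mem' := by
    rintro c F ⟨φ, hφ, hF⟩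
    refine ⟨c • φ, hφ.const_smul c, ?_⟩
    simpa only [pdx_const_smul, pdy_const_smul] using hF.const_smul c

/-- The jets of the elements of `𝓗₀¹(Ω)`. -/
def sobolevJets (α₁ α₂ : ℝ) : Submodule ℝ Jet := (testJets α₁ α₂).topologicalClosure

end Jets

theorem locallyIntegrableOn_of_memLp_mul {s : Set (ℝ × ℝ)} (hs : IsOpen s) {m g : ℝ × ℝ → ℝ}
    (hm : ContinuousOn m s) (hm0 : ∀ p ∈ s, m p ≠ 0)
    (hg : MemLp (fun p => m p * g p) 2 (volume.restrict s)) : LocallyIntegrableOn g s := by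
  have hmg : LocallyIntegrableOn (fun p => m p * g p) s :=
    locallyIntegrableOn_of_locallyIntegrable_restrict (hg.locallyIntegrable (by norm_num))
  have hg' := hmg.continuousOn_mul (hm.inv₀ hm0) hs.isLocallyClosed
  rw [locallyIntegrableOn_iff hs.isLocallyClosed] at hg' ⊢
  refine fun K hKs hK => (hg' K hKs hK).congr_fun (fun p hp => ?_) hK.measurableSet
  exact inv_mul_cancel_left₀ (hm0 p (hKs hp)) (g p)

section SobolevJets

variable {α₁ α₂ : ℝ} {F : Jet} {u gx gy : ℝ × ℝ → ℝ}

theorem IsJet.mem_sobolevJets_iff (hF : IsJet α₁ α₂ F u gx gy) :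
    F ∈ sobolevJets α₁ α₂ ↔ ∀ ε : ℝ, 0 < ε → ∃ φ, IsTest φ ∧
      H1Norm α₁ α₂ (u - φ) (gx - pdx φ) (gy - pdy φ) < ε := by
  rw [sobolevJets, ← SetLike.mem_coe, Submodule.topologicalClosure_coe, Metric.mem_closure_iff]
  refine forall₂_congr fun ε _ => ⟨?_, ?_⟩
  · rintro ⟨G, ⟨φ, hφ, hG⟩, hFG⟩
    exact ⟨φ, hφ, by rwa [← (hF.sub hG).norm_eq_H1Norm, ← dist_eq_norm]⟩
  · rintro ⟨φ, hφ, hlt⟩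
    obtain ⟨G, hG⟩ := IsTestOn.exists_isJet α₁ α₂ hφ
    exact ⟨G, ⟨φ, hφ, hG⟩, by rwa [dist_eq_norm, (hF.sub hG).norm_eq_H1Norm]⟩

theorem IsJet.memH1 (hF : IsJet α₁ α₂ F u gx gy) (hmem : F ∈ sobolevJets α₁ α₂) :
    MemH1 α₁ α₂ u gx gy := by
  have hu : MemLp u 2 (volume.restrict Omega) := (Lp.memLp (F 0)).ae_eq hF.val
  have hgx : MemLp (fun p => p.2 ^ α₁ * gx p) 2 (volume.restrict Omega) :=
    (Lp.memLp (F 1)).ae_eq hF.dx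
  have hgy : MemLp (fun p => p.1 ^ α₂ * gy p) 2 (volume.restrict Omega) :=
    (Lp.memLp (F 2)).ae_eq hF.dy
  have hlu : LocallyIntegrableOn u Omega :=
    locallyIntegrableOn_of_locallyIntegrable_restrict (hu.locallyIntegrable (by norm_num))
  have hclosure (i : Fin 3) : (F 0, F i) ∈
      closure ((fun G : Jet => (G 0, G i)) '' (testJets α₁ α₂ : Set Jet)) :=
    map_mem_closure (f := fun G : Jet => (G 0, G i)) (by fun_prop) hmem fun G hG =>
      mem_image_of_mem _ hG
  refine ⟨hu, ⟨hlu, ?_, fun ψ hψ => ?_⟩, ⟨hlu, ?_, fun ψ hψ => ?_⟩, hgx, hgy⟩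
  · exact locallyIntegrableOn_of_memLp_mul isOpen_Omega (continuousOn_snd_rpow α₁)
      (snd_rpow_ne_zero α₁) hgx
  · refine integral_mul_fderiv_of_mem_closure isOpen_Omega (continuousOn_snd_rpow α₁)
      (snd_rpow_ne_zero α₁) (1, 0) ?_ (hclosure 1) hF.val hF.dx hψ
    rintro _ ⟨G, ⟨φ, hφ, hG⟩, rfl⟩
    exact ⟨φ, hφ, hG.val, hG.dx⟩
  · exact locallyIntegrableOn_of_memLp_mul isOpen_Omega (continuousOn_fst_rpow α₂)
      (fst_rpow_ne_zero α₂) hgy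
  · refine integral_mul_fderiv_of_mem_closure isOpen_Omega (continuousOn_fst_rpow α₂)
      (fst_rpow_ne_zero α₂) (0, 1) ?_ (hclosure 2) hF.val hF.dy hψ
    rintro _ ⟨G, ⟨φ, hφ, hG⟩, rfl⟩
    exact ⟨φ, hφ, hG.val, hG.dy⟩

theorem memH10_iff_exists_isJet :
    MemH10 α₁ α₂ u gx gy ↔ ∃ F ∈ sobolevJets α₁ α₂, IsJet α₁ α₂ F u gx gy := by
  constructor
  · rintro ⟨h, happrox⟩
    obtain ⟨F, hF⟩ := exists_isJet_of_memLp h.memL2 h.wgx h.wgy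
    exact ⟨F, hF.mem_sobolevJets_iff.2 happrox, hF⟩
  · rintro ⟨F, hmem, hF⟩
    exact ⟨hF.memH1 hmem, hF.mem_sobolevJets_iff.1 hmem⟩

end SobolevJets

/-- The form domain `H₀(Ω)` as a Hilbert space with inner product `(u,v)_{L²} + a(u,v)`: `u` is
encoded by its weighted jet together with `√V u ∈ L²(Ω)`. -/
def energySpace (α₁ α₂ : ℝ) (V : ℝ × ℝ → ℝ) :
    Submodule ℝ (WithLp 2 (Jet × L2Omega)) :=
  (sobolevJets α₁ α₂).comap (WithLp.fstL 2 ℝ Jet L2Omega).toLinearMap ⊓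
    (mulGraph (volume.restrict Omega) 2 fun p => √(V p)).comap
      ((PiLp.proj 2 _ 0 ∘L WithLp.fstL 2 ℝ Jet L2Omega).prod (WithLp.sndL 2 ℝ _ _)).toLinearMap

namespace energySpace

variable {α₁ α₂ : ℝ} {V : ℝ × ℝ → ℝ}

theorem fst_mem (F : energySpace α₁ α₂ V) : F.1.fst ∈ sobolevJets α₁ α₂ :=
  F.2.1

theorem snd_ae_eq (F : energySpace α₁ α₂ V) :
    F.1.snd =ᵐ[volume.restrict Omega] fun p => √(V p) * F.1.fst 0 p :=
  F.2.2

instance : CompleteSpace (energySpace α₁ α₂ V) :=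
  IsClosed.completeSpace_coe (hs :=
    ((testJets α₁ α₂).isClosed_topologicalClosure.preimage (ContinuousLinearMap.continuous _)).inter
      ((isClosed_mulGraph _).preimage (ContinuousLinearMap.continuous _)))

/-- The embedding of `H₀(Ω)` into `L²(Ω)`. -/
def toL2 (α₁ α₂ : ℝ) (V : ℝ × ℝ → ℝ) : energySpace α₁ α₂ V →L[ℝ] L2Omega :=
  PiLp.proj 2 _ 0 ∘L WithLp.fstL 2 ℝ Jet L2Omega ∘L (energySpace α₁ α₂ V).subtypeL

theorem toL2_apply (F : energySpace α₁ α₂ V) : toL2 α₁ α₂ V F = F.1.fst 0 := rfl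

theorem energyForm_toL2_eq_inner_add (F G : energySpace α₁ α₂ V) :
    energyForm (toL2 α₁ α₂ V) F G =
      inner ℝ (F.1.fst 1) (G.1.fst 1) + inner ℝ (F.1.fst 2) (G.1.fst 2) +
        inner ℝ F.1.snd G.1.snd := by
  have hinner : inner ℝ F G =
      inner ℝ (F.1.fst 0) (G.1.fst 0) + inner ℝ (F.1.fst 1) (G.1.fst 1) +
        inner ℝ (F.1.fst 2) (G.1.fst 2) + inner ℝ F.1.snd G.1.snd := by
    rw [← Fin.sum_univ_three fun i => inner ℝ (F.1.fst i) (G.1.fst i)]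
    rfl
  rw [energyForm, hinner, toL2_apply, toL2_apply]
  ring

variable {F G : energySpace α₁ α₂ V} {u gx gy v hx hy : ℝ × ℝ → ℝ}

theorem energyForm_toL2 (hV : ∀ᵐ p ∂volume.restrict Omega, 0 ≤ V p)
    (hF : IsJet α₁ α₂ F.1.fst u gx gy) (hG : IsJet α₁ α₂ G.1.fst v hx hy) :
    energyForm (toL2 α₁ α₂ V) F G = aForm α₁ α₂ V u gx gy v hx hy := by
  have hVuv : (fun p => F.1.snd p * G.1.snd p) =ᵐ[volume.restrict Omega]
      fun p => V p * u p * v p := by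
    filter_upwards [hV, snd_ae_eq F, snd_ae_eq G, hF.val, hG.val] with p hp hFp hGp hup hvp
    rw [hFp, hGp, hup, hvp, mul_mul_mul_comm, Real.mul_self_sqrt hp, mul_assoc]
  have hint (f g : L2Omega) := (Lp.memLp f).integrable_mul (Lp.memLp g)
  have hintx : Integrable (fun p => p.2 ^ α₁ * gx p * (p.2 ^ α₁ * hx p)) (volume.restrict Omega) :=
    (hint (F.1.fst 1) (G.1.fst 1)).congr (hF.dx.mul hG.dx)
  have hinty : Integrable (fun p => p.1 ^ α₂ * gy p * (p.1 ^ α₂ * hy p)) (volume.restrict Omega) :=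
    (hint (F.1.fst 2) (G.1.fst 2)).congr (hF.dy.mul hG.dy)
  have hintxy : Integrable (fun p => p.2 ^ α₁ * gx p * (p.2 ^ α₁ * hx p) +
      p.1 ^ α₂ * gy p * (p.1 ^ α₂ * hy p)) (volume.restrict Omega) := hintx.add hinty
  have hintV := (hint F.1.snd G.1.snd).congr hVuv
  rw [energyForm_toL2_eq_inner_add, inner_eq_integral_mul hF.dx hG.dx,
    inner_eq_integral_mul hF.dy hG.dy, inner_eq_integral_mul .rfl .rfl, integral_congr_ae hVuv,
    ← integral_add hintx hinty, ← integral_add hintxy hintV, aForm]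

end energySpace

theorem memH0_iff_exists_isJet {α₁ α₂ : ℝ} {V u gx gy : ℝ × ℝ → ℝ}
    (hVm : AEStronglyMeasurable V (volume.restrict Omega))
    (hV : ∀ᵐ p ∂volume.restrict Omega, 0 ≤ V p) :
    MemH0 α₁ α₂ V u gx gy ↔ ∃ F : energySpace α₁ α₂ V, IsJet α₁ α₂ F.1.fst u gx gy := by
  have hsq : (fun p => (√(V p) * u p) ^ 2) =ᵐ[volume.restrict Omega] fun p => V p * u p ^ 2 := by
    filter_upwards [hV] with p hp
    rw [mul_pow, Real.sq_sqrt hp]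
  rw [MemH0, memH10_iff_exists_isJet]
  constructor
  · rintro ⟨⟨F, hmem, hF⟩, hint⟩
    have hm : AEStronglyMeasurable (fun p => √(V p) * u p) (volume.restrict Omega) :=
      (Real.continuous_sqrt.comp_aestronglyMeasurable hVm).mul
        ((Lp.aestronglyMeasurable _).congr hF.val)
    have hL2 : MemLp (fun p => √(V p) * u p) 2 (volume.restrict Omega) :=
      (memLp_two_iff_integrable_sq hm).2 (hint.congr hsq.symm)
    refine ⟨⟨WithLp.toLp 2 (F, hL2.toLp), hmem, ?_⟩, hF⟩
    filter_upwards [hL2.coeFn_toLp, hF.val] with p h₁ h₂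
    exact h₁.trans (congrArg (√(V p) * ·) h₂.symm)
  · rintro ⟨F, hF⟩
    refine ⟨⟨F.1.fst, energySpace.fst_mem F, hF⟩, (Lp.memLp F.1.snd).integrable_sq.congr ?_⟩
    filter_upwards [hsq, energySpace.snd_ae_eq F, hF.val] with p h₁ h₂ h₃
    rw [← h₁, h₂, h₃]

/-! ### Compactness and density of the embedding of the form domain -/

theorem mul_sq_le_rpow_mul_sq {α t : ℝ} (hα : α ≤ 1 / 2) (ht0 : 0 < t) (ht1 : t ≤ 1) (s : ℝ) :
    t * s ^ 2 ≤ (t ^ α * s) ^ 2 := by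
  have hpow : t ≤ (t ^ α) ^ 2 :=
    calc t = t ^ (1 : ℝ) := (Real.rpow_one t).symm
      _ ≤ t ^ (α * 2) := Real.rpow_le_rpow_of_exponent_ge ht0 ht1 (by linarith)
      _ = (t ^ α) ^ 2 := by rw [Real.rpow_mul ht0.le, Real.rpow_two]
  rw [mul_pow]
  gcongr

theorem norm_sq_eq_intervalIntegral {F : L2Omega} {f : ℝ × ℝ → ℝ}
    (hF : F =ᵐ[volume.restrict Omega] f) (hf : Continuous f) :
    ‖F‖ ^ 2 = ∫ x in (0 : ℝ)..1, ∫ y in (0 : ℝ)..1, f (x, y) ^ 2 := by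
  rw [norm_sq_eq_integral_sq hF]
  exact setIntegral_Ioo_prod_Ioo (hf.pow 2) zero_le_one zero_le_one

theorem exists_grid_param {δ : ℝ} (hδ : 0 < δ) :
    ∃ (h l : ℝ) (n : ℕ), 0 < h ∧ h < δ ∧ 0 < l ∧ l ≤ h ∧ h + n * l = 1 := by
  obtain ⟨h, h0, hh⟩ : ∃ h : ℝ, 0 < h ∧ h < min 1 δ := exists_between (lt_min one_pos hδ)
  obtain ⟨h1, hhδ⟩ := lt_min_iff.1 hh
  obtain ⟨n, hn⟩ := exists_nat_gt ((1 - h) / h)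
  have hn0 : (0 : ℝ) < n := (div_pos (sub_pos.2 h1) h0).trans hn
  exact ⟨h, (1 - h) / n, n, h0, hhδ, div_pos (sub_pos.2 h1) hn0, ((div_lt_comm₀ h0 hn0).1 hn).le,
    by rw [mul_div_cancel₀ _ hn0.ne', add_sub_cancel]⟩

/-- The open square `(h + i l, h + (i + 1) l) × (h + j l, h + (j + 1) l)` of a grid of mesh `l`
starting at `(h, h)`. -/
def gridCell (h l : ℝ) (i j : ℕ) : Set (ℝ × ℝ) :=
  Ioo (h + i * l) (h + (i + 1) * l) ×ˢ Ioo (h + j * l) (h + (j + 1) * l)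

theorem measurableSet_gridCell (h l : ℝ) (i j : ℕ) : MeasurableSet (gridCell h l i j) :=
  measurableSet_Ioo.prod measurableSet_Ioo

theorem gridCell_subset_Omega {h l : ℝ} (h0 : 0 ≤ h) (hl : 0 ≤ l) {n i j : ℕ}
    (hn : h + n * l ≤ 1) (hi : i < n) (hj : j < n) : gridCell h l i j ⊆ Omega := by
  have hbound {k : ℕ} (hk : k < n) : Ioo (h + k * l) (h + (k + 1) * l) ⊆ Ioo 0 1 := by
    have hk' : ((k : ℝ) + 1) * l ≤ n * l := by gcongr; exact_mod_cast hk
    exact Ioo_subset_Ioo (by positivity) (by linarith)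
  exact prod_mono (hbound hi) (hbound hj)

/-- The indicator function of a grid cell, as an element of `L²(Ω)`. -/
def cellIndicator (h l : ℝ) (i j : ℕ) : L2Omega :=
  indicatorConstLp 2 (measurableSet_gridCell h l i j) (measure_ne_top _ _) 1

theorem inner_cellIndicator {h l : ℝ} (hl : 0 ≤ l) {i j : ℕ} (hsub : gridCell h l i j ⊆ Omega)
    {F : L2Omega} {f : ℝ × ℝ → ℝ} (hF : F =ᵐ[volume.restrict Omega] f) (hf : Continuous f) :
    inner ℝ (cellIndicator h l i j) F =
      ∫ x in h + i * l..h + (i + 1) * l, ∫ y in h + j * l..h + (j + 1) * l, f (x, y) := by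
  rw [cellIndicator, L2.inner_indicatorConstLp_one,
    setIntegral_congr_ae (measurableSet_gridCell h l i j) (hF.mono fun p hp _ => hp),
    Measure.restrict_restrict (measurableSet_gridCell h l i j), inter_eq_left.2 hsub, gridCell]
  exact setIntegral_Ioo_prod_Ioo hf (by nlinarith) (by nlinarith)

section Embedding

variable {α₁ α₂ : ℝ}

namespace IsTestOn

variable {φ : ℝ × ℝ → ℝ}

theorem snd_mul_pdx_sq_le (hφ : IsTestOn Omega φ) (hα : α₁ ≤ 1 / 2) (p : ℝ × ℝ) :
    p.2 * pdx φ p ^ 2 ≤ (p.2 ^ α₁ * pdx φ p) ^ 2 := by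
  by_cases hp : p ∈ Omega
  · exact mul_sq_le_rpow_mul_sq hα hp.2.1 hp.2.2.le _
  · rw [pdx, (hφ.fderiv_apply (1, 0)).eq_zero_of_notMem hp]
    simp

theorem fst_mul_pdy_sq_le (hφ : IsTestOn Omega φ) (hα : α₂ ≤ 1 / 2) (p : ℝ × ℝ) :
    p.1 * pdy φ p ^ 2 ≤ (p.1 ^ α₂ * pdy φ p) ^ 2 := by
  by_cases hp : p ∈ Omega
  · exact mul_sq_le_rpow_mul_sq hα hp.1.1 hp.1.2.le _
  · rw [pdy, (hφ.fderiv_apply (0, 1)).eq_zero_of_notMem hp]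
    simp

theorem continuous_snd_rpow_mul_pdx (hφ : IsTestOn Omega φ) (α : ℝ) :
    Continuous fun p => p.2 ^ α * pdx φ p :=
  (hφ.fderiv_apply (1, 0)).continuous_mul isOpen_Omega (continuousOn_snd_rpow α)

theorem continuous_fst_rpow_mul_pdy (hφ : IsTestOn Omega φ) (α : ℝ) :
    Continuous fun p => p.1 ^ α * pdy φ p :=
  (hφ.fderiv_apply (0, 1)).continuous_mul isOpen_Omega (continuousOn_fst_rpow α)

theorem eq_zero_of_fst_eq_zero (hφ : IsTestOn Omega φ) (y : ℝ) : φ (0, y) = 0 :=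
  hφ.eq_zero_of_notMem fun hp => lt_irrefl _ hp.1.1

theorem eq_zero_of_snd_eq_zero (hφ : IsTestOn Omega φ) (x : ℝ) : φ (x, 0) = 0 :=
  hφ.eq_zero_of_notMem fun hp => lt_irrefl _ hp.2.1

end IsTestOn

theorem norm_sq_le_of_mem_sobolevJets (hα₁ : α₁ ≤ 1 / 2) (hα₂ : α₂ ≤ 1 / 2) {F : Jet}
    (hF : F ∈ sobolevJets α₁ α₂) : ‖F 0‖ ^ 2 ≤ ‖F 1‖ ^ 2 + ‖F 2‖ ^ 2 := by
  have hclosed : IsClosed {F : Jet | ‖F 0‖ ^ 2 ≤ ‖F 1‖ ^ 2 + ‖F 2‖ ^ 2} :=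
    isClosed_le (by fun_prop) (by fun_prop)
  refine closure_minimal ?_ hclosed hF
  rintro F ⟨φ, hφ, hF⟩
  have hwx := hφ.continuous_snd_rpow_mul_pdx α₁
  have hwy := hφ.continuous_fst_rpow_mul_pdy α₂
  have key := integral_sq_le_strips_add (hφ.1.of_le (by norm_cast)) hwx hwy
    hφ.eq_zero_of_fst_eq_zero hφ.eq_zero_of_snd_eq_zero
    (fun x y _ => hφ.snd_mul_pdx_sq_le hα₁ (x, y)) (fun x y _ => hφ.fst_mul_pdy_sq_le hα₂ (x, y))
    zero_le_one le_rfl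
  rw [mem_ofPred_eq, norm_sq_eq_intervalIntegral hF.val hφ.1.continuous,
    norm_sq_eq_intervalIntegral hF.dx hwx, norm_sq_eq_intervalIntegral hF.dy hwy]
  simpa only [intervalIntegral.integral_same, one_mul, add_zero] using key

theorem norm_sq_le_add_sum_inner_cellIndicator (hα₁ : α₁ ≤ 1 / 2) (hα₂ : α₂ ≤ 1 / 2) {F : Jet}
    (hF : F ∈ sobolevJets α₁ α₂) {h l : ℝ} (h0 : 0 < h) (hl : 0 < l) (hlh : l ≤ h) {n : ℕ}
    (hn : h + n * l = 1) :
    ‖F 0‖ ^ 2 ≤ 2 * h * (‖F 1‖ ^ 2 + ‖F 2‖ ^ 2) + (l ^ 2)⁻¹ *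
      ∑ i ∈ Finset.range n, ∑ j ∈ Finset.range n, inner ℝ (cellIndicator h l i j) (F 0) ^ 2 := by
  have hclosed : IsClosed {F : Jet | ‖F 0‖ ^ 2 ≤ 2 * h * (‖F 1‖ ^ 2 + ‖F 2‖ ^ 2) + (l ^ 2)⁻¹ *
      ∑ i ∈ Finset.range n, ∑ j ∈ Finset.range n, inner ℝ (cellIndicator h l i j) (F 0) ^ 2} :=
    isClosed_le (by fun_prop) (by fun_prop)
  refine closure_minimal ?_ hclosed hF
  rintro F ⟨φ, hφ, hF⟩
  have hwx := hφ.continuous_snd_rpow_mul_pdx α₁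
  have hwy := hφ.continuous_fst_rpow_mul_pdy α₂
  have key := integral_sq_le_add_sum_cells (hφ.1.of_le (by norm_cast)) hwx hwy
    hφ.eq_zero_of_fst_eq_zero hφ.eq_zero_of_snd_eq_zero
    (fun x y _ => hφ.snd_mul_pdx_sq_le hα₁ (x, y)) (fun x y _ => hφ.fst_mul_pdy_sq_le hα₂ (x, y))
    h0 hl hlh hn
  have hcells : ∑ i ∈ Finset.range n, ∑ j ∈ Finset.range n,
      inner ℝ (cellIndicator h l i j) (F 0) ^ 2 = ∑ i ∈ Finset.range n, ∑ j ∈ Finset.range n,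
        (∫ x in h + i * l..h + (i + 1) * l, ∫ y in h + j * l..h + (j + 1) * l, φ (x, y)) ^ 2 :=
    Finset.sum_congr rfl fun i hi => Finset.sum_congr rfl fun j hj => by
      rw [inner_cellIndicator hl.le (gridCell_subset_Omega h0.le hl.le hn.le
        (Finset.mem_range.1 hi) (Finset.mem_range.1 hj)) hF.val hφ.1.continuous]
  rwa [mem_ofPred_eq, norm_sq_eq_intervalIntegral hF.val hφ.1.continuous,
    norm_sq_eq_intervalIntegral hF.dx hwx, norm_sq_eq_intervalIntegral hF.dy hwy, hcells]

end Embedding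

theorem IsTestOn.integrableOn_mul_sq {V φ : ℝ × ℝ → ℝ} {s : Set (ℝ × ℝ)} (hφ : IsTestOn s φ)
    (hVi : LocallyIntegrableOn V s) : IntegrableOn (fun p => V p * φ p ^ 2) s := by
  have hK : IntegrableOn (fun p => V p * φ p ^ 2) (tsupport φ) :=
    (hVi.integrableOn_compact_subset hφ.2.2 hφ.2.1).mul_continuousOn
      (hφ.1.continuous.pow 2).continuousOn hφ.2.1
  refine (hK.integrable_of_forall_notMem_eq_zero fun p hp => ?_).integrableOn
  rw [image_eq_zero_of_notMem_tsupport hp, zero_pow two_ne_zero, mul_zero]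

theorem IsTestOn.memH0 (α₁ α₂ : ℝ) {V φ : ℝ × ℝ → ℝ} (hφ : IsTestOn Omega φ)
    (hVi : LocallyIntegrableOn V Omega) : MemH0 α₁ α₂ V φ (pdx φ) (pdy φ) := by
  obtain ⟨F, hF⟩ := hφ.exists_isJet α₁ α₂
  exact ⟨memH10_iff_exists_isJet.2 ⟨F, (testJets α₁ α₂).le_topologicalClosure ⟨φ, hφ, hF⟩, hF⟩,
    hφ.integrableOn_mul_sq hVi⟩

namespace energySpace

variable {α₁ α₂ : ℝ} {V : ℝ × ℝ → ℝ}

theorem norm_sq_add_norm_sq_le_energyForm (F : energySpace α₁ α₂ V) :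
    ‖F.1.fst 1‖ ^ 2 + ‖F.1.fst 2‖ ^ 2 ≤ energyForm (toL2 α₁ α₂ V) F F := by
  simp only [energyForm_toL2_eq_inner_add, real_inner_self_eq_norm_sq]
  linarith [sq_nonneg ‖F.1.snd‖]

theorem norm_toL2_sq_le_energyForm (hα₁ : α₁ ≤ 1 / 2) (hα₂ : α₂ ≤ 1 / 2)
    (F : energySpace α₁ α₂ V) : ‖toL2 α₁ α₂ V F‖ ^ 2 ≤ energyForm (toL2 α₁ α₂ V) F F :=
  (norm_sq_le_of_mem_sobolevJets hα₁ hα₂ (fst_mem F)).trans (norm_sq_add_norm_sq_le_energyForm F)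

theorem isCompactOperator_toL2 (hα₁ : α₁ ≤ 1 / 2) (hα₂ : α₂ ≤ 1 / 2) :
    IsCompactOperator (toL2 α₁ α₂ V) := by
  classical
  refine isCompactOperator_of_forall_exists_finset (H := energySpace α₁ α₂ V) fun ε hε => ?_
  obtain ⟨h, l, n, h0, hhε, hl, hlh, hgrid⟩ := exists_grid_param (half_pos (pow_pos hε 2))
  refine ⟨(Finset.range n ×ˢ Finset.range n).image fun ij => cellIndicator h l ij.1 ij.2,
    fun F hF => abs_le_of_sq_le_sq' ?_ (by positivity) |>.2⟩
  have hmean : ∑ i ∈ Finset.range n, ∑ j ∈ Finset.range n,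
      inner ℝ (cellIndicator h l i j) (F.1.fst 0) ^ 2 = 0 :=
    Finset.sum_eq_zero fun i hi => Finset.sum_eq_zero fun j hj => by
      have hij := hF _ (Finset.mem_image_of_mem _ (Finset.mk_mem_product hi hj))
      rw [toL2_apply] at hij
      rw [hij, zero_pow two_ne_zero]
  have henergy : ‖F.1.fst 1‖ ^ 2 + ‖F.1.fst 2‖ ^ 2 ≤ ‖F‖ ^ 2 := by
    have := norm_sq_add_norm_sq_le_energyForm F
    rw [energyForm, real_inner_self_eq_norm_sq, real_inner_self_eq_norm_sq] at this
    linarith [sq_nonneg ‖toL2 α₁ α₂ V F‖]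
  calc ‖toL2 α₁ α₂ V F‖ ^ 2
      ≤ 2 * h * (‖F.1.fst 1‖ ^ 2 + ‖F.1.fst 2‖ ^ 2) := by
        have key := norm_sq_le_add_sum_inner_cellIndicator hα₁ hα₂ (fst_mem F) h0 hl hlh hgrid
        rwa [hmean, mul_zero, add_zero] at key
    _ ≤ ε ^ 2 * ‖F‖ ^ 2 := by gcongr; linarith
    _ = (ε * ‖F‖) ^ 2 := (mul_pow _ _ _).symm

theorem denseRange_toL2 (hVi : LocallyIntegrableOn V Omega)
    (hV : ∀ᵐ p ∂volume.restrict Omega, 0 ≤ V p) : DenseRange (toL2 α₁ α₂ V) := by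
  change Dense ((toL2 α₁ α₂ V).range : Set L2Omega)
  rw [Submodule.dense_iff_topologicalClosure_eq_top, Submodule.topologicalClosure_eq_top_iff,
    Submodule.eq_bot_iff]
  intro f hf
  refine Lp_two_eq_zero_of_integral_mul_test_eq_zero isOpen_Omega f fun φ hφ => ?_
  obtain ⟨F, hF⟩ := (memH0_iff_exists_isJet hVi.aestronglyMeasurable hV).1
    (hφ.memH0 α₁ α₂ hVi)
  rw [← inner_eq_integral_mul .rfl hF.val, ← toL2_apply]
  exact Submodule.inner_left_of_mem_orthogonal (LinearMap.mem_range_self _ F) hf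

end energySpace

/-! ### Min-max values and the spectral theorem -/

section MinMax

variable {α₁ α₂ : ℝ} {V : ℝ × ℝ → ℝ} {k : ℕ} {F : Fin k → energySpace α₁ α₂ V}
  {φ φx φy : Fin k → ℝ × ℝ → ℝ}

theorem sum_smul_fst (c : Fin k → ℝ) (F : Fin k → energySpace α₁ α₂ V) :
    (∑ i, c i • F i).1.fst = ∑ i, c i • (F i).1.fst := by
  let T := WithLp.fstL 2 ℝ Jet L2Omega ∘L (energySpace α₁ α₂ V).subtypeL
  exact (map_sum T _ _).trans (Finset.sum_congr rfl fun i _ => map_smul T (c i) (F i))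

theorem linearIndependent_toL2_comp_iff
    (hF : ∀ i, IsJet α₁ α₂ (F i).1.fst (φ i) (φx i) (φy i)) :
    LinearIndependent ℝ (energySpace.toL2 α₁ α₂ V ∘ F) ↔
      ∀ c : Fin k → ℝ, (∀ᵐ p ∂volume.restrict Omega, ∑ i, c i * φ i p = 0) → c = 0 := by
  rw [Fintype.linearIndependent_iff]
  refine forall_congr' fun c => ?_
  rw [Lp.eq_zero_iff_ae_eq_zero, funext_iff]
  refine imp_congr_left (eventually_congr ?_)
  filter_upwards [coeFn_sum_smul_ae_eq c fun i => (hF i).val] with p hp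
  exact (congrArg (· = (0 : ℝ)) hp).to_iff

theorem rayleighSup_eq_supEnergy (hV : ∀ᵐ p ∂volume.restrict Omega, 0 ≤ V p)
    (hF : ∀ i, IsJet α₁ α₂ (F i).1.fst (φ i) (φx i) (φy i)) :
    rayleighSup α₁ α₂ V φ φx φy =
      supEnergy (energySpace.toL2 α₁ α₂ V) (Submodule.span ℝ (range F)) := by
  have hsum (c : Fin k → ℝ) : IsJet α₁ α₂ (∑ i, c i • F i).1.fst (fun p => ∑ i, c i * φ i p)
      (fun p => ∑ i, c i * φx i p) fun p => ∑ i, c i * φy i p := by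
    rw [sum_smul_fst]
    exact .sum_smul c hF
  have hnorm (c : Fin k → ℝ) : ‖energySpace.toL2 α₁ α₂ V (∑ i, c i • F i)‖ = 1 ↔
      ∫ p in Omega, (∑ i, c i * φ i p) ^ 2 = 1 := by
    rw [← norm_sq_eq_integral_sq (hsum c).val, pow_eq_one_iff_of_nonneg (norm_nonneg _) two_ne_zero,
      energySpace.toL2_apply]
  rw [rayleighSup, supEnergy]
  congr 1
  ext r
  constructor
  · rintro ⟨c, hc, rfl⟩
    exact ⟨∑ i, c i • F i, ⟨(Submodule.mem_span_range_iff_exists_fun ℝ).2 ⟨c, rfl⟩, (hnorm c).2 hc⟩,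
      energySpace.energyForm_toL2 hV (hsum c) (hsum c)⟩
  · rintro ⟨G, ⟨hG, hG1⟩, rfl⟩
    obtain ⟨c, rfl⟩ := (Submodule.mem_span_range_iff_exists_fun ℝ).1 hG
    exact ⟨c, (hnorm c).1 hG1, energySpace.energyForm_toL2 hV (hsum c) (hsum c)⟩

theorem minmaxSet_eq_image_supEnergy (hVm : AEStronglyMeasurable V (volume.restrict Omega))
    (hV : ∀ᵐ p ∂volume.restrict Omega, 0 ≤ V p) (hk : 0 < k) :
    minmaxSet α₁ α₂ V k = supEnergy (H := energySpace α₁ α₂ V) (energySpace.toL2 α₁ α₂ V) ''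
      {E | Module.finrank ℝ E = k ∧ Disjoint E (energySpace.toL2 α₁ α₂ V).ker} := by
  ext r
  constructor
  · rintro ⟨φ, φx, φy, hmem, hind, rfl⟩
    choose F hF using fun i => (memH0_iff_exists_isJet hVm hV).1 (hmem i)
    exact ⟨Submodule.span ℝ (range F), (exists_linearIndependent_comp_span_eq_iff hk).1
      ⟨F, (linearIndependent_toL2_comp_iff hF).2 hind, rfl⟩, (rayleighSup_eq_supEnergy hV hF).symm⟩
  · rintro ⟨E, hE, rfl⟩
    obtain ⟨F, hind, rfl⟩ := (exists_linearIndependent_comp_span_eq_iff hk).2 hE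
    choose φ φx φy hF using fun i => exists_isJet α₁ α₂ (F i).1.fst
    exact ⟨φ, φx, φy, fun i => (memH0_iff_exists_isJet hVm hV).2 ⟨F i, hF i⟩,
      (linearIndependent_toL2_comp_iff hF).1 hind, (rayleighSup_eq_supEnergy hV hF).symm⟩

end MinMax

theorem energySpace.exists_isEigenbasis {α₁ α₂ : ℝ} (hα₁ : α₁ ≤ 1 / 2) (hα₂ : α₂ ≤ 1 / 2)
    {V : ℝ × ℝ → ℝ} (hVi : LocallyIntegrableOn V Omega)
    (hV : ∀ᵐ p ∂volume.restrict Omega, 0 ≤ V p) :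
    ∃ (lam : ℕ → ℝ) (w : ℕ → energySpace α₁ α₂ V),
      IsEigenbasis (energySpace.toL2 α₁ α₂ V) lam w := by
  have hL : ¬ FiniteDimensional ℝ L2Omega :=
    not_finiteDimensional_Lp_two_restrict isOpen_Omega infinite_Omega
      (volume_Omega.trans_ne ENNReal.one_ne_top)
  exact _root_.exists_isEigenbasis (isCompactOperator_toL2 hα₁ hα₂) (denseRange_toL2 hVi hV) hL
    zero_le_one fun F => by simpa only [one_mul] using norm_toL2_sq_le_energyForm hα₁ hα₂ F

theorem spectral_theorem_general (α₁ α₂ : ℝ) (hα₁ : α₁ ≤ 1 / 2) (hα₂ : α₂ ≤ 1 / 2)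
    (V : ℝ × ℝ → ℝ) (hVi : LocallyIntegrableOn V Omega volume)
    (hV : ∀ᵐ p ∂(volume.restrict Omega), 0 ≤ V p) :
    ∃ (lam : ℕ → ℝ) (w wx wy : ℕ → ℝ × ℝ → ℝ),
      0 < lam 0 ∧ Monotone lam ∧ Tendsto lam atTop atTop ∧
      (∀ k, MemH0 α₁ α₂ V (w k) (wx k) (wy k)) ∧
      (∀ j k : ℕ, (∫ p in Omega, w j p * w k p) = if j = k then 1 else 0) ∧
      (∀ f : ℝ × ℝ → ℝ, MemLp f 2 (volume.restrict Omega) →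
        (∀ k, (∫ p in Omega, f p * w k p) = 0) →
        (∀ᵐ p ∂(volume.restrict Omega), f p = 0)) ∧
      (∀ k, ∀ v hx hy : ℝ × ℝ → ℝ, MemH0 α₁ α₂ V v hx hy →
        aForm α₁ α₂ V (w k) (wx k) (wy k) v hx hy = lam k * ∫ p in Omega, w k p * v p) ∧
      (∀ k : ℕ, lam k = lamk α₁ α₂ V (k + 1)) := by
  obtain ⟨lam, F, hEig⟩ := energySpace.exists_isEigenbasis hα₁ hα₂ hVi hV
  choose w wx wy hF using fun k => exists_isJet α₁ α₂ (F k).1.fst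
  have hVm := hVi.aestronglyMeasurable
  refine ⟨lam, w, wx, wy, hEig.pos, hEig.monotone, hEig.tendsto_atTop,
    fun k => (memH0_iff_exists_isJet hVm hV).2 ⟨F k, hF k⟩, fun j k => ?_, fun f hf hfw => ?_,
    fun k v hx hy hv => ?_, fun k => ?_⟩
  · rw [← inner_eq_integral_mul (hF j).val (hF k).val]
    exact orthonormal_iff_ite.1 hEig.orthonormal j k
  · have hf0 : hf.toLp = 0 := hEig.eq_zero _ fun k =>
      (inner_eq_integral_mul hf.coeFn_toLp (hF k).val).trans (hfw k)
    exact hf.coeFn_toLp.symm.trans (Lp.eq_zero_iff_ae_eq_zero.1 hf0)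
  · obtain ⟨G, hG⟩ := (memH0_iff_exists_isJet hVm hV).1 hv
    rw [← energySpace.energyForm_toL2 hV (hF k) hG, hEig.energyForm_eq,
      ← inner_eq_integral_mul (hF k).val hG.val]
    rfl
  · rw [lamk, minmaxSet_eq_image_supEnergy hVm hV k.succ_pos]
    exact (hEig.isLeast_supEnergy k).csInf_eq.symm

/-- Spectral theorem for the sub-elliptic operator with potential
`V ∈ S_p`, `1 < p < ∞`: there is a nondecreasing sequence of positive eigenvalues
`λ₁ ≤ λ₂ ≤ ⋯ → ∞` with eigenfunctions `w_k ∈ H₀(Ω)` forming an orthonormal basis of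
`L²(Ω)`, and the eigenvalues obey the min-max characterization. (Here `lam k` is the
`(k+1)`-st eigenvalue `λ_{k+1}`.) -/
theorem spectral_theorem (α₁ α₂ ppow M : ℝ)
    (hα₁ : α₁ ∈ Ioo (0:ℝ) (1/2)) (hα₂ : α₂ ∈ Ioo (0:ℝ) (1/2))
    (hp : 1 < ppow) (hM : 0 < M) (V : ℝ × ℝ → ℝ) (hV : MemSp ppow M V) :
    ∃ (lam : ℕ → ℝ) (w wx wy : ℕ → ℝ × ℝ → ℝ),
      0 < lam 0 ∧ Monotone lam ∧ Tendsto lam atTop atTop ∧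
      (∀ k, MemH0 α₁ α₂ V (w k) (wx k) (wy k)) ∧
      (∀ j k : ℕ, (∫ p in Omega, w j p * w k p) = if j = k then 1 else 0) ∧
      (∀ f : ℝ × ℝ → ℝ, MemLp f 2 (volume.restrict Omega) →
        (∀ k, (∫ p in Omega, f p * w k p) = 0) →
        (∀ᵐ p ∂(volume.restrict Omega), f p = 0)) ∧
      (∀ k, ∀ v hx hy : ℝ × ℝ → ℝ, MemH0 α₁ α₂ V v hx hy →
        aForm α₁ α₂ V (w k) (wx k) (wy k) v hx hy = lam k * ∫ p in Omega, w k p * v p) ∧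
      (∀ k : ℕ, lam k = lamk α₁ α₂ V (k + 1)) :=
  have hVi : IntegrableOn V Omega :=
    memLp_one_iff_integrable.1 (hV.1.mono_exponent (by simpa using ENNReal.ofReal_le_ofReal hp.le))
  spectral_theorem_general α₁ α₂ hα₁.2.le hα₂.2.le V hVi.locallyIntegrableOn hV.2.1
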